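/- arXiv:math-ph/0606022 — 2 statements merged into one kernel-verified Lean document; each statement's English description precedes it below -/
import Mathlib

section
/- Let b₁ ∈ ℝ and b₂ < b₃ with 0 < b₃ − b₂ ≤ π, and let λ ∈ ℂ \ [1,+∞). Let Ω := {(x₁,x₂) ∈ ℝ² : x₁ > b₁, b₂ < x₂ < b₃}. Suppose v : ℝ² → ℂ is smooth on Ω, continuous on the closure of Ω, v and its gradient are square-integrable over Ω, Δv + λv = 0 holds on Ω, and v(x₁,b₂) = v(x₁,b₃) = 0 for all x₁ ≥ b₁. For each integer j ≥ 1 set α_j := (2/(b₃−b₂)) ∫_{b₂}^{b₃} v(b₁,t)·sin(πj(t−b₂)/(b₃−b₂)) dt. Then: (i) for every point (x₁,x₂) with x₁ > b₁ and b₂ ≤ x₂ ≤ b₃, the series Σ_{j=1}^∞ α_j · exp(−√(π²j²/(b₃−b₂)² − λ)·(x₁ − b₁)) · sin(πj(x₂−b₂)/(b₃−b₂)) converges absolutely and its sum equals v(x₁,x₂); and (ii) ((b₃−b₂)/2)·Σ_{j=1}^∞ |α_j|² = ∫_{b₂}^{b₃} |v(b₁,t)|² dt. -/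
/-!
Write `ℓ = b₃ - b₂`, and let `c_n(x)` be the `n`-th sine moment of `v(x, ·)` over `[b₂, b₃]`. The
expansion says that `c_n(x) = c_n(b₁) e^{-μ_n (x - b₁)}` with `μ_n = √(π²n²/ℓ² - λ)`, combined with
the convergence of sine series.

Formally `c_n'' = μ_n² c_n`, by two integrations by parts against the sine. As `v` is only
continuous up to the lateral boundary, the integrations by parts are done on the shrunken segments
`[b₂ + e, b₃ - e]`. There the moments satisfy `f'' = μ² f + r` (`moment_ode`), where `r` involves
only the values of `v` at the end points and the discrepancy of the frequencies, not the normal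
derivative, because the sine of the shrunken segment vanishes at its ends. An ODE estimate
(`norm_three_point_le`) turns this into an approximate identity
`f(x + h) + f(x - h) = (e^{μh} + e^{-μh}) f(x)`, which passes to the limit `e → 0` because `v` is
continuous and vanishes on the lateral boundary (`moment_three_point`).

A continuous solution of this identity which is square-integrable on a half-line is a multiple of
`e^{-μx}` (`eq_exp_of_three_point`): the increment `D(x) = c(x + h) - e^{-μh} c(x)` is multiplied
by `e^{μh}`, of modulus greater than one, under translation by `h`, so its square-integrability
forces it to vanish. Here `Re μ > 0` because `λ ∉ [1, ∞)` and `ℓ ≤ π` (`csqrt_re_pos`).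

Finally the sine series of a continuous function vanishing at both ends is the Fourier series of its
odd extension, so Parseval's identity (`hasSum_sq_sineCoeff`) and, for summable coefficients,
pointwise convergence (`hasSum_sineSeries`) come from the theory on the circle. The former is
applied at `x = b₁`, the latter at `x > b₁`, where the coefficients decay exponentially.
-/

open MeasureTheory Set Filter

noncomputable section

/-- Principal branch of the complex square root (analytic off `(-∞,0]`, `√1 = 1`). -/
def csqrt (z : ℂ) : ℂ := z ^ (1/2 : ℂ)

/-- The Laplacian of a function on `ℝ²`. -/
def lap (f : ℝ × ℝ → ℂ) (p : ℝ × ℝ) : ℂ :=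
  fderiv ℝ (fun q => fderiv ℝ f q (1, 0)) p (1, 0) +
  fderiv ℝ (fun q => fderiv ℝ f q (0, 1)) p (0, 1)

/-! ### Sine series on the unit interval -/

/-- The odd extension of `f` from `[0, ∞)` to `ℝ`. -/
def oddExt (f : ℝ → ℂ) (s : ℝ) : ℂ := if 0 ≤ s then f s else -f (-s)

/-- The `n`-th sine coefficient `2 ∫₀¹ f(s) sin(π n s) ds` of a function on `[0, 1]`. -/
def sineCoeff (f : ℝ → ℂ) (n : ℤ) : ℂ :=
  2 * ∫ s in (0:ℝ)..1, f s * (Real.sin (Real.pi * n * s) : ℂ)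

lemma continuous_oddExt {f : ℝ → ℂ} (hf : Continuous f) (h0 : f 0 = 0) :
    Continuous (oddExt f) := by
  unfold oddExt
  refine Continuous.if_le hf (by fun_prop) continuous_const continuous_id ?_
  intro x hx
  simp [← hx, h0]

lemma integral_neg_one_one {E : Type*} [NormedAddCommGroup E] [NormedSpace ℝ E]
    {G : ℝ → E} (hG : Continuous G) :
    ∫ s in (-1:ℝ)..1, G s = ∫ s in (0:ℝ)..1, (G s + G (-s)) := by
  have hG' : Continuous fun s => G (-s) := hG.comp continuous_neg
  rw [intervalIntegral.integral_add (hG.intervalIntegrable _ _)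
    (hG'.intervalIntegrable _ _), intervalIntegral.integral_comp_neg,
    neg_zero, add_comm,
    intervalIntegral.integral_add_adjacent_intervals (hG.intervalIntegrable _ _)
      (hG.intervalIntegrable _ _)]

/-- The `n`-th Fourier coefficient of the odd extension over `[-1, 1]`. The end points are
variables so that the lemma applies to intervals written as `[a, a + 2]`. -/
lemma fourierCoeffOn_oddExt {f : ℝ → ℂ} (hf : Continuous f) (h0 : f 0 = 0)
    {a b : ℝ} (hab : a < b) (ha : a = -1) (hb : b = 1) (n : ℤ) :
    fourierCoeffOn hab (oddExt f) n = -(Complex.I / 2) * sineCoeff f n := by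
  subst ha hb
  have hg := continuous_oddExt hf h0
  rw [fourierCoeffOn_eq_integral]
  have e1 : ∀ x : ℝ, (fourier (-n) (x : AddCircle ((1:ℝ) - -1)) : ℂ) • oddExt f x
      = Complex.exp (-(Real.pi * n * x : ℝ) * Complex.I) * oddExt f x := by
    intro x
    rw [fourier_coe_apply, smul_eq_mul]
    congr 2
    push_cast
    ring
  simp_rw [e1]
  rw [integral_neg_one_one (by fun_prop)]
  have e2 : ∀ s ∈ uIcc (0:ℝ) 1,
      Complex.exp (-(Real.pi * n * s : ℝ) * Complex.I) * oddExt f s +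
        Complex.exp (-(Real.pi * n * (-s) : ℝ) * Complex.I) * oddExt f (-s)
      = (-2 * Complex.I) * (f s * (Real.sin (Real.pi * n * s) : ℂ)) := by
    intro s hs
    rw [uIcc_of_le zero_le_one] at hs
    have h1 : oddExt f s = f s := by simp [oddExt, hs.1]
    have h2 : oddExt f (-s) = -f s := by
      rcases hs.1.eq_or_lt with h | h
      · simp [oddExt, ← h, h0]
      · simp [oddExt, h]
    rw [h1, h2, Complex.ofReal_sin, Complex.sin]
    have : (-((Real.pi * n * (-s) : ℝ) : ℂ)) = ((Real.pi * n * s : ℝ) : ℂ) := by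
      push_cast; ring
    rw [this]
    linear_combination (f s * (Complex.exp (-((Real.pi * n * s : ℝ) : ℂ) * Complex.I) -
      Complex.exp (((Real.pi * n * s : ℝ) : ℂ) * Complex.I))) * Complex.I_sq
  rw [intervalIntegral.integral_congr e2, intervalIntegral.integral_const_mul, sineCoeff]
  rw [Complex.real_smul]
  push_cast
  ring

lemma sineCoeff_neg (f : ℝ → ℂ) (n : ℤ) : sineCoeff f (-n) = -sineCoeff f n := by
  unfold sineCoeff
  rw [← mul_neg, ← intervalIntegral.integral_neg]
  congr 2
  ext s
  rw [← mul_neg, ← Complex.ofReal_neg, ← Real.sin_neg]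
  push_cast
  ring_nf

lemma sineCoeff_zero (f : ℝ → ℂ) : sineCoeff f 0 = 0 := by simp [sineCoeff]

lemma hasSum_fold_int {G : Type*} [AddCommGroup G] [TopologicalSpace G] [IsTopologicalAddGroup G]
    {f : ℤ → G} {m : G}
    (hf : HasSum f m) (h0 : f 0 = 0) :
    HasSum (fun j : ℕ => f (j + 1) + f (-(j + 1))) m := by
  have h3 := (hasSum_nat_add_iff' 1).2 hf.nat_add_neg
  simpa [h0] using h3

/-- Parseval's identity for sine series. -/
lemma hasSum_sq_sineCoeff {f : ℝ → ℂ} (hf : Continuous f) (h0 : f 0 = 0) :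
    HasSum (fun j : ℕ => ‖sineCoeff f (j + 1)‖ ^ 2) (2 * ∫ s in (0:ℝ)..1, ‖f s‖ ^ 2) := by
  have hab : (-1:ℝ) < 1 := by norm_num
  have hg := continuous_oddExt hf h0
  have hmem : MemLp (oddExt f) 2 (volume.restrict (Ioc (-1:ℝ) 1)) := by
    obtain ⟨C, hC⟩ := isCompact_Icc.exists_bound_of_continuousOn
      (s := Icc (-1:ℝ) 1) hg.continuousOn
    refine MemLp.of_bound hg.aestronglyMeasurable C ?_
    filter_upwards [ae_restrict_mem measurableSet_Ioc] with x hx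
    exact hC x (Ioc_subset_Icc_self hx)
  have h := hasSum_sq_fourierCoeffOn hab hmem
  simp_rw [fourierCoeffOn_oddExt hf h0 hab rfl rfl] at h
  rw [integral_neg_one_one (by fun_prop)] at h
  have e2 : ∀ s ∈ uIcc (0:ℝ) 1, ‖oddExt f s‖ ^ 2 + ‖oddExt f (-s)‖ ^ 2 = 2 * ‖f s‖ ^ 2 := by
    intro s hs
    rw [uIcc_of_le zero_le_one] at hs
    have h1 : oddExt f s = f s := by simp [oddExt, hs.1]
    have h2 : oddExt f (-s) = -f s := by
      rcases hs.1.eq_or_lt with h | h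
      · simp [oddExt, ← h, h0]
      · simp [oddExt, h]
    rw [h1, h2, norm_neg]; ring
  rw [intervalIntegral.integral_congr e2, intervalIntegral.integral_const_mul] at h
  have h' := hasSum_fold_int h (by simp [sineCoeff_zero])
  convert! h'.mul_left 2 using 1
  · ext j
    rw [sineCoeff_neg]
    simp only [norm_mul, norm_neg, norm_div, Complex.norm_I, Complex.norm_ofNat]
    ring
  · rw [smul_eq_mul]; ring

/-- A continuous function vanishing at `0` and `1` is the sum of its sine series on `[0, 1]`
as soon as its sine coefficients are summable. -/
lemma hasSum_sineSeries {f : ℝ → ℂ} (hf : Continuous f) (h0 : f 0 = 0) (h1 : f 1 = 0)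
    (hs : Summable fun j : ℕ => ‖sineCoeff f (j + 1)‖) {s : ℝ} (hs01 : s ∈ Icc (0:ℝ) 1) :
    HasSum (fun j : ℕ => sineCoeff f (j + 1) * (Real.sin (Real.pi * (j + 1) * s) : ℂ)) (f s) := by
  have : Fact ((0:ℝ) < 2) := ⟨two_pos⟩
  have hg := continuous_oddExt hf h0
  -- At `s = 1` both sides vanish, so the half-open fundamental domain `[-1, 1)` suffices.
  rcases hs01.2.eq_or_lt with rfl | hlt
  · rw [h1]
    have : ∀ j : ℕ, sineCoeff f (j + 1) * (Real.sin (Real.pi * (j + 1) * 1) : ℂ) = 0 := by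
      intro j
      have := Real.sin_nat_mul_pi (j + 1)
      push_cast at this
      rw [mul_one, mul_comm Real.pi, this]
      simp
    simp_rw [this]
    exact hasSum_zero
  have hper : oddExt f (-1) = oddExt f (-1 + 2) := by
    norm_num [oddExt, h1]
  let F : C(AddCircle (2:ℝ), ℂ) :=
    ⟨AddCircle.liftIco 2 (-1) (oddExt f), AddCircle.liftIco_continuous hper hg.continuousOn⟩
  have hcoef : ∀ n : ℤ, fourierCoeff F n = -(Complex.I / 2) * sineCoeff f n := by
    intro n
    change fourierCoeff (AddCircle.liftIco 2 (-1) (oddExt f)) n = _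
    rw [fourierCoeff_liftIco_eq]
    exact fourierCoeffOn_oddExt hf h0 _ rfl (by norm_num) n
  have hsum : Summable (fourierCoeff F) := by
    have : fourierCoeff F = fun n => -(Complex.I / 2) * sineCoeff f n := funext hcoef
    rw [this]
    apply Summable.mul_left
    have hs' : Summable fun j : ℕ => sineCoeff f ((j : ℤ) + 1) := hs.of_norm
    refine Summable.of_add_one_of_neg_add_one hs' ?_
    simpa only [sineCoeff_neg] using hs'.neg
  have h := has_pointwise_sum_fourier_series_of_summable hsum (s : AddCircle (2:ℝ))
  have hFs : F (s : AddCircle (2:ℝ)) = f s := by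
    change AddCircle.liftIco 2 (-1) (oddExt f) s = _
    rw [AddCircle.liftIco_coe_apply ⟨by linarith [hs01.1], by linarith⟩]
    simp [oddExt, hs01.1]
  rw [hFs] at h
  simp_rw [hcoef] at h
  have h' := hasSum_fold_int h (by simp [sineCoeff_zero])
  convert! h' using 1
  ext j
  rw [sineCoeff_neg, fourier_coe_apply, fourier_coe_apply, Complex.ofReal_sin, Complex.sin,
    smul_eq_mul, smul_eq_mul]
  have e1 : 2 * (Real.pi : ℂ) * Complex.I * (((j : ℤ) + 1 : ℤ) : ℂ) * s / ((2:ℝ) : ℂ)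
      = ((Real.pi * (j + 1) * s : ℝ) : ℂ) * Complex.I := by
    push_cast; ring
  have e2 : 2 * (Real.pi : ℂ) * Complex.I * ((-((j : ℤ) + 1) : ℤ) : ℂ) * s / ((2:ℝ) : ℂ)
      = -((Real.pi * (j + 1) * s : ℝ) : ℂ) * Complex.I := by
    push_cast; ring
  rw [e1, e2]
  ring

/-! ### A perturbed three-point recurrence -/

/-- If `f'' = μ² f + r`, then `(f' + σ f) e^{-σ(· - x)}` with `σ = ± μ` has derivative
`r e^{-σ(· - x)}`, hence is nearly constant when `r` is small. -/
lemma norm_first_integral_sub_le {μ σ : ℂ} (hσ : σ ^ 2 = μ ^ 2) {f f' r : ℝ → ℂ} {x h δ : ℝ}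
    (hδ : 0 ≤ δ)
    (hf : ∀ y ∈ Icc (x - h) (x + h), HasDerivAt f (f' y) y)
    (hf' : ∀ y ∈ Icc (x - h) (x + h), HasDerivAt f' (μ ^ 2 * f y + r y) y)
    (hr : ∀ y ∈ Icc (x - h) (x + h), ‖r y‖ ≤ δ) {y : ℝ} (hy : y ∈ Icc (x - h) (x + h)) :
    ‖(f' y + σ * f y) * Complex.exp (-σ * (y - x)) - (f' x + σ * f x)‖
      ≤ δ * Real.exp (‖σ‖ * h) * h := by
  have hh : 0 ≤ h := by linarith [hy.1, hy.2]
  have hx : x ∈ Icc (x - h) (x + h) := ⟨by linarith, by linarith⟩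
  have hd : ∀ y ∈ Icc (x - h) (x + h),
      HasDerivAt (fun y : ℝ => (f' y + σ * f y) * Complex.exp (-σ * (y - x)))
        (r y * Complex.exp (-σ * (y - x))) y := by
    intro y hy
    have h1 : HasDerivAt (fun y : ℝ => Complex.exp (-σ * (y - x)))
        (Complex.exp (-σ * (y - x)) * (-σ * 1)) y :=
      (((hasDerivAt_id y).ofReal_comp.sub_const (x : ℂ)).const_mul (-σ)).cexp
    refine (((hf' y hy).add ((hf y hy).const_mul σ)).mul h1).congr_deriv ?_
    simp only [Pi.add_apply]
    linear_combination -(f y * Complex.exp (-σ * (y - x))) * hσ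
  have hb : ∀ y ∈ Icc (x - h) (x + h),
      ‖r y * Complex.exp (-σ * (y - x))‖ ≤ δ * Real.exp (‖σ‖ * h) := by
    intro y hy
    rw [norm_mul]
    refine mul_le_mul (hr y hy) ?_ (norm_nonneg _) hδ
    refine (Complex.norm_exp_le_exp_norm _).trans (Real.exp_le_exp.2 ?_)
    rw [norm_mul, norm_neg, ← Complex.ofReal_sub, Complex.norm_real]
    refine mul_le_mul_of_nonneg_left ?_ (norm_nonneg _)
    rw [Real.norm_eq_abs, abs_le]
    constructor <;> linarith [hy.1, hy.2]
  have := (convex_Icc (x - h) (x + h)).norm_image_sub_le_of_norm_hasDerivWithin_le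
    (fun y hy => (hd y hy).hasDerivWithinAt) hb hx hy
  simp only [sub_self, mul_zero, Complex.exp_zero, mul_one] at this
  refine this.trans (mul_le_mul_of_nonneg_left ?_ (by positivity))
  rw [Real.norm_eq_abs, abs_le]
  constructor <;> linarith [hy.1, hy.2]

/-- Exact solutions of `f'' = μ² f` satisfy `f(x+h) + f(x-h) = 2 cosh(μ h) f(x)`; a forcing term
`r` perturbs this identity by an amount controlled by `sup ‖r‖`. -/
lemma norm_three_point_le {μ : ℂ} {f f' r : ℝ → ℂ} {x h δ : ℝ} (hδ : 0 ≤ δ) (hh : 0 ≤ h)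
    (hf : ∀ y ∈ Icc (x - h) (x + h), HasDerivAt f (f' y) y)
    (hf' : ∀ y ∈ Icc (x - h) (x + h), HasDerivAt f' (μ ^ 2 * f y + r y) y)
    (hr : ∀ y ∈ Icc (x - h) (x + h), ‖r y‖ ≤ δ) :
    ‖2 * μ * (f (x + h) + f (x - h) - (Complex.exp (μ * h) + Complex.exp (-(μ * h))) * f x)‖
      ≤ 4 * Real.exp (‖μ‖ * h) * (Real.exp (‖μ‖ * h) * h) * δ := by
  have hp : x + h ∈ Icc (x - h) (x + h) := ⟨by linarith, le_rfl⟩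
  have hm : x - h ∈ Icc (x - h) (x + h) := ⟨le_rfl, by linarith⟩
  have w1 := norm_first_integral_sub_le (μ := μ) (σ := μ) rfl hδ hf hf' hr hp
  have w2 := norm_first_integral_sub_le (μ := μ) (σ := μ) rfl hδ hf hf' hr hm
  have y1 := norm_first_integral_sub_le (μ := μ) (σ := -μ) (by ring) hδ hf hf' hr hp
  have y2 := norm_first_integral_sub_le (μ := μ) (σ := -μ) (by ring) hδ hf hf' hr hm
  push_cast at w1 w2 y1 y2
  rw [norm_neg] at y1 y2
  have a1 : -μ * (((x : ℂ) + h) - x) = -(μ * h) := by ring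
  have a2 : -μ * (((x : ℂ) - h) - x) = μ * h := by ring
  have a3 : - -μ * (((x : ℂ) + h) - x) = μ * h := by ring
  have a4 : - -μ * (((x : ℂ) - h) - x) = -(μ * h) := by ring
  rw [a1] at w1; rw [a2] at w2; rw [a3] at y1; rw [a4] at y2
  have hE : Complex.exp (μ * h) * Complex.exp (-(μ * h)) = 1 := by
    rw [← Complex.exp_add]; simp
  have n1 : ‖Complex.exp (μ * h)‖ ≤ Real.exp (‖μ‖ * h) := by
    refine (Complex.norm_exp_le_exp_norm _).trans (Real.exp_le_exp.2 ?_)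
    rw [norm_mul, Complex.norm_real, Real.norm_of_nonneg hh]
  have n2 : ‖Complex.exp (-(μ * h))‖ ≤ Real.exp (‖μ‖ * h) := by
    refine (Complex.norm_exp_le_exp_norm _).trans (Real.exp_le_exp.2 ?_)
    rw [norm_neg, norm_mul, Complex.norm_real, Real.norm_of_nonneg hh]
  set E := Complex.exp (μ * h)
  set E' := Complex.exp (-(μ * h))
  set M := Real.exp (‖μ‖ * h)
  have hM : 0 ≤ M := (Real.exp_pos _).le
  have key : 2 * μ * (f (x + h) + f (x - h) - (E + E') * f x)
      = ((f' (x + h) + μ * f (x + h)) * E' - (f' x + μ * f x)) * E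
        - ((f' (x + h) + -μ * f (x + h)) * E - (f' x + -μ * f x)) * E'
        + ((f' (x - h) + μ * f (x - h)) * E - (f' x + μ * f x)) * E'
        - ((f' (x - h) + -μ * f (x - h)) * E' - (f' x + -μ * f x)) * E := by
    linear_combination (-2 * μ * (f (x + h) + f (x - h))) * hE
  rw [key]
  have bd : ∀ z w : ℂ, ‖z‖ ≤ δ * M * h → ‖w‖ ≤ M → ‖z * w‖ ≤ δ * M * h * M := by
    intro z w hz hw
    rw [norm_mul]
    exact mul_le_mul hz hw (norm_nonneg _) (by positivity)
  have b1 := bd _ _ w1 n1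
  have b2 := bd _ _ y1 n2
  have b3 := bd _ _ w2 n2
  have b4 := bd _ _ y2 n1
  refine (norm_sub_le _ _).trans ?_
  refine (add_le_add (norm_add_le _ _) le_rfl).trans ?_
  refine (add_le_add (add_le_add (norm_sub_le _ _) le_rfl) le_rfl).trans ?_
  linarith

/-! ### Sine moments of a solution -/

/-- Differentiation under the integral sign for jointly continuous data. -/
lemma hasDerivAt_integral_unit {b : ℝ} {G G' : ℝ × ℝ → ℂ}
    (hG : ContinuousOn G (Ioi b ×ˢ Icc (0:ℝ) 1)) (hG' : ContinuousOn G' (Ioi b ×ˢ Icc (0:ℝ) 1))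
    (hd : ∀ x, b < x → ∀ s ∈ Icc (0:ℝ) 1, HasDerivAt (fun x => G (x, s)) (G' (x, s)) x)
    {x : ℝ} (hx : b < x) :
    HasDerivAt (fun x => ∫ s in (0:ℝ)..1, G (x, s)) (∫ s in (0:ℝ)..1, G' (x, s)) x := by
  obtain ⟨p, hp, hpx⟩ := exists_between hx
  have hK : IsCompact (Icc p (x + 1) ×ˢ Icc (0:ℝ) 1) := isCompact_Icc.prod isCompact_Icc
  have hKs : Icc p (x + 1) ×ˢ Icc (0:ℝ) 1 ⊆ Ioi b ×ˢ Icc (0:ℝ) 1 :=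
    prod_mono (fun y hy => hp.trans_le hy.1) le_rfl
  obtain ⟨C, hC⟩ := hK.exists_bound_of_continuousOn (hG'.mono hKs)
  have slice : ∀ {H : ℝ × ℝ → ℂ}, ContinuousOn H (Ioi b ×ˢ Icc (0:ℝ) 1) → ∀ y, b < y →
      ContinuousOn (fun s => H (y, s)) (Icc (0:ℝ) 1) := by
    intro H hH y hy
    exact hH.comp (by fun_prop) (fun s hs => ⟨hy, hs⟩)
  have hu : uIcc (0:ℝ) 1 = Icc 0 1 := uIcc_of_le zero_le_one
  have hu' : uIoc (0:ℝ) 1 = Ioc 0 1 := uIoc_of_le zero_le_one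
  refine (intervalIntegral.hasDerivAt_integral_of_dominated_loc_of_deriv_le
    (F := fun x s => G (x, s)) (F' := fun x s => G' (x, s)) (bound := fun _ => C)
    (s := Ioo p (x + 1)) (Ioo_mem_nhds hpx (by linarith)) ?_ ?_ ?_ ?_ ?_ ?_).2
  · filter_upwards [Ioi_mem_nhds hx] with y hy
    rw [hu']
    exact ((slice hG y hy).mono Ioc_subset_Icc_self).aestronglyMeasurable measurableSet_Ioc
  · refine ContinuousOn.intervalIntegrable ?_
    rw [hu]
    exact slice hG x hx
  · rw [hu']
    exact ((slice hG' x hx).mono Ioc_subset_Icc_self).aestronglyMeasurable measurableSet_Ioc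
  · refine Eventually.of_forall fun s hs y hy => hC _ ⟨Ioo_subset_Icc_self hy, ?_⟩
    rw [hu'] at hs
    exact Ioc_subset_Icc_self hs
  · exact intervalIntegrable_const
  · refine Eventually.of_forall fun s hs y hy => hd y (hp.trans hy.1) s ?_
    rw [hu'] at hs
    exact Ioc_subset_Icc_self hs

/-- The open half-strip `x₁ > b₁`, `b₂ < x₂ < b₃`. -/
def halfStrip (b₁ b₂ b₃ : ℝ) : Set (ℝ × ℝ) := Ioi b₁ ×ˢ Ioo b₂ b₃

lemma isOpen_halfStrip (b₁ b₂ b₃ : ℝ) : IsOpen (halfStrip b₁ b₂ b₃) := isOpen_Ioi.prod isOpen_Ioo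

/-- The moment of `V(x, ·)` on the segment `[a, a + ℓ]` against the `n`-th sine mode of that
segment, in the unit variable `s = (x₂ - a) / ℓ`. -/
def moment (V : ℝ × ℝ → ℂ) (n : ℤ) (a ℓ x : ℝ) : ℂ :=
  ∫ s in (0:ℝ)..1, V (x, a + ℓ * s) * (Real.sin (Real.pi * n * s) : ℂ)

/-- The forcing term in the ordinary differential equation for `moment V n a ℓ`: the contribution
of the values of `V` on the two ends of the segment. -/
def momentForcing (V : ℝ × ℝ → ℂ) (n : ℤ) (a ℓ x : ℝ) : ℂ :=
  (Real.pi * n / ℓ ^ 2 : ℝ) * ((Real.cos (Real.pi * n) : ℝ) * V (x, a + ℓ) - V (x, a))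

/-- On a segment strictly inside the strip, the sine moment of a solution of the Helmholtz equation
solves a second order equation, forced by the end point values of the solution. No boundary
regularity of the gradient is needed since the sine vanishes at both ends of the segment. -/
lemma moment_ode {b₁ b₂ b₃ : ℝ} {V : ℝ × ℝ → ℂ} {lam : ℂ}
    (hV : ContDiffOn ℝ (⊤ : ℕ∞) V (halfStrip b₁ b₂ b₃))
    (hH : ∀ p ∈ halfStrip b₁ b₂ b₃, lap V p + lam * V p = 0)
    (n : ℤ) {a ℓ : ℝ} (hℓ : 0 < ℓ) (ha : b₂ < a) (haℓ : a + ℓ < b₃) :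
    ∃ f' : ℝ → ℂ, ∀ x, b₁ < x → HasDerivAt (moment V n a ℓ) (f' x) x ∧
      HasDerivAt f' (((Real.pi * n / ℓ : ℝ) ^ 2 - lam) * moment V n a ℓ x
        + momentForcing V n a ℓ x) x := by
  set Ω := halfStrip b₁ b₂ b₃ with hΩ
  have hO : IsOpen Ω := isOpen_halfStrip _ _ _
  have hdir : ∀ (W : ℝ × ℝ → ℂ) (e : ℝ × ℝ), ContDiffOn ℝ (⊤ : ℕ∞) W Ω →
      ContDiffOn ℝ (⊤ : ℕ∞) (fun q => fderiv ℝ W q e) Ω := by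
    intro W e hW
    exact (hW.fderiv_of_isOpen hO (by simp)).clm_apply contDiffOn_const
  have hdiff : ∀ (W : ℝ × ℝ → ℂ), ContDiffOn ℝ (⊤ : ℕ∞) W Ω → ∀ p ∈ Ω,
      HasFDerivAt W (fderiv ℝ W p) p := fun W hW p hp =>
    ((hW.contDiffAt (hO.mem_nhds hp)).differentiableAt (by simp)).hasFDerivAt
  have hmem : ∀ x, b₁ < x → ∀ s ∈ Icc (0:ℝ) 1, (x, a + ℓ * s) ∈ Ω := by
    intro x hx s hs
    refine ⟨hx, ?_, ?_⟩ <;> simp only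
    · nlinarith [hs.1]
    · nlinarith [hs.2]
  have hcomp : ∀ (W : ℝ × ℝ → ℂ), ContDiffOn ℝ (⊤ : ℕ∞) W Ω →
      ContinuousOn (fun q : ℝ × ℝ => W (q.1, a + ℓ * q.2) * (Real.sin (Real.pi * n * q.2) : ℂ))
        (Ioi b₁ ×ˢ Icc (0:ℝ) 1) := by
    intro W hW
    refine ContinuousOn.mul ?_ (by fun_prop)
    exact hW.continuousOn.comp (by fun_prop) (fun q hq => hmem q.1 hq.1 q.2 hq.2)
  have hx1 : ∀ (W : ℝ × ℝ → ℂ), ContDiffOn ℝ (⊤ : ℕ∞) W Ω → ∀ x, b₁ < x →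
      HasDerivAt (moment W n a ℓ) (moment (fun q => fderiv ℝ W q (1, 0)) n a ℓ x) x := by
    intro W hW x hx
    refine hasDerivAt_integral_unit (hcomp W hW) (hcomp _ (hdir W (1, 0) hW)) ?_ hx
    intro y hy s hs
    have h := (hdiff W hW _ (hmem y hy s hs)).comp_hasDerivAt y
      ((hasDerivAt_id y).prodMk (hasDerivAt_const y (a + ℓ * s)))
    exact h.mul_const ((Real.sin (Real.pi * n * s) : ℝ) : ℂ)
  refine ⟨moment (fun q => fderiv ℝ V q (1, 0)) n a ℓ, fun x hx => ⟨hx1 V hV x hx, ?_⟩⟩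
  have h2 := hx1 _ (hdir V (1, 0) hV) x hx
  convert h2 using 1
  set V2 : ℝ × ℝ → ℂ := fun q => fderiv ℝ V q (0, 1) with hV2
  set V11 : ℝ × ℝ → ℂ := fun q => fderiv ℝ (fun q => fderiv ℝ V q (1, 0)) q (1, 0) with hV11
  set V22 : ℝ × ℝ → ℂ := fun q => fderiv ℝ V2 q (0, 1) with hV22
  have hcV2 := hdir V (0, 1) hV
  have hcV22 := hdir V2 (0, 1) hcV2
  have hcV11 : ContDiffOn ℝ (⊤ : ℕ∞) V11 Ω := hdir _ (1, 0) (hdir V (1, 0) hV)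
  set k : ℝ := Real.pi * n with hk
  have vert : ∀ (W : ℝ × ℝ → ℂ), ContDiffOn ℝ (⊤ : ℕ∞) W Ω → ∀ s ∈ Icc (0:ℝ) 1,
      HasDerivAt (fun s => W (x, a + ℓ * s)) (ℓ * fderiv ℝ W (x, a + ℓ * s) (0, 1)) s := by
    intro W hW s hs
    have h := (hdiff W hW _ (hmem x hx s hs)).comp_hasDerivAt s
      ((hasDerivAt_const s x).prodMk (((hasDerivAt_id s).const_mul ℓ).const_add a))
    refine h.congr_deriv ?_
    have : ((0:ℝ), ℓ * 1) = ℓ • ((0:ℝ), (1:ℝ)) := by simp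
    rw [this, map_smul, Complex.real_smul]
  have hsin : ∀ s : ℝ, HasDerivAt (fun s : ℝ => ((Real.sin (k * s) : ℝ) : ℂ))
      ((k * Real.cos (k * s) : ℝ) : ℂ) s := by
    intro s
    have := (((hasDerivAt_id s).const_mul k).sin).ofReal_comp
    refine this.congr_deriv ?_
    simp only [id]
    push_cast
    ring
  have hcos : ∀ s : ℝ, HasDerivAt (fun s : ℝ => ((k * Real.cos (k * s) : ℝ) : ℂ))
      ((-k ^ 2 * Real.sin (k * s) : ℝ) : ℂ) s := by
    intro s
    have := (((((hasDerivAt_id s).const_mul k).cos).const_mul k)).ofReal_comp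
    refine this.congr_deriv ?_
    simp only [id]
    push_cast
    ring
  have hslice : ∀ (W : ℝ × ℝ → ℂ), ContDiffOn ℝ (⊤ : ℕ∞) W Ω →
      IntervalIntegrable (fun s => W (x, a + ℓ * s) * (Real.sin (k * s) : ℂ)) volume 0 1 := by
    intro W hW
    refine ContinuousOn.intervalIntegrable ?_
    rw [uIcc_of_le zero_le_one]
    exact (hcomp W hW).comp (f := fun s : ℝ => (x, s)) (by fun_prop) (fun s hs => ⟨hx, hs⟩)
  have hsk : Real.sin k = 0 := by rw [hk, mul_comm]; exact Real.sin_int_mul_pi n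
  -- Green's formula on the segment: `U'' S - U S''` is the derivative of `U' S - U S'`.
  have ftc := intervalIntegral.integral_eq_sub_of_hasDerivAt (a := 0) (b := 1)
    (f := fun s => ℓ * V2 (x, a + ℓ * s) * (Real.sin (k * s) : ℂ)
      - V (x, a + ℓ * s) * ((k * Real.cos (k * s) : ℝ) : ℂ))
    (f' := fun s => (ℓ : ℂ) ^ 2 * (V22 (x, a + ℓ * s) * (Real.sin (k * s) : ℂ))
      + (k : ℂ) ^ 2 * (V (x, a + ℓ * s) * (Real.sin (k * s) : ℂ)))
    (by
      intro s hs
      rw [uIcc_of_le zero_le_one] at hs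
      refine ((((vert V2 hcV2 s hs).const_mul (ℓ : ℂ)).mul (hsin s)).sub
        ((vert V hV s hs).mul (hcos s))).congr_deriv ?_
      simp only [hV22, hV2]
      push_cast
      ring)
    (((hslice V22 hcV22).const_mul _).add ((hslice V hV).const_mul _))
  rw [intervalIntegral.integral_add ((hslice V22 hcV22).const_mul _) ((hslice V hV).const_mul _),
    intervalIntegral.integral_const_mul, intervalIntegral.integral_const_mul] at ftc
  have hpde : moment V11 n a ℓ x = -(∫ s in (0:ℝ)..1, V22 (x, a + ℓ * s) * (Real.sin (k * s) : ℂ))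
      - lam * moment V n a ℓ x := by
    unfold moment
    have hneg : IntervalIntegrable (fun s => -(V22 (x, a + ℓ * s) * (Real.sin (k * s) : ℂ)))
        volume 0 1 := (hslice V22 hcV22).neg
    rw [← intervalIntegral.integral_neg, ← intervalIntegral.integral_const_mul,
      ← intervalIntegral.integral_sub hneg ((hslice V hV).const_mul _)]
    refine intervalIntegral.integral_congr fun s hs => ?_
    rw [uIcc_of_le zero_le_one] at hs
    have := hH _ (hmem x hx s hs)
    change V11 _ + V22 _ + _ = 0 at this
    linear_combination (Real.sin (k * s) : ℂ) * this
  rw [hpde]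
  have hm : (∫ s in (0:ℝ)..1, V (x, a + ℓ * s) * (Real.sin (k * s) : ℂ)) = moment V n a ℓ x := rfl
  rw [hm] at ftc
  simp only [mul_one, mul_zero, hsk, Real.sin_zero, Real.cos_zero, add_zero, Complex.ofReal_zero]
    at ftc
  unfold momentForcing
  rw [← hk]
  have hℓ' : (ℓ : ℂ) ≠ 0 := by exact_mod_cast hℓ.ne'
  set J := ∫ s in (0:ℝ)..1, V22 (x, a + ℓ * s) * (Real.sin (k * s) : ℂ)
  push_cast at ftc ⊢
  field_simp
  linear_combination ftc

lemma continuous_moment {V : ℝ × ℝ → ℂ} (hV : Continuous V) (n : ℤ) :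
    Continuous fun q : ℝ × ℝ × ℝ => moment V n q.1 q.2.1 q.2.2 := by
  unfold moment
  apply intervalIntegral.continuous_parametric_intervalIntegral_of_continuous'
  fun_prop

/-- The sine moments of a solution over the full width of the strip satisfy the same three-point
identity as the solutions of `f'' = μ² f`. This is obtained by shrinking the segment slightly and
passing to the limit, the forcing term tending to zero because of the Dirichlet condition. -/
lemma moment_three_point {b₁ b₂ b₃ : ℝ} (hb : b₂ < b₃) {V : ℝ × ℝ → ℂ} {lam : ℂ}
    (hVc : Continuous V) (hV : ContDiffOn ℝ (⊤ : ℕ∞) V (halfStrip b₁ b₂ b₃))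
    (hH : ∀ p ∈ halfStrip b₁ b₂ b₃, lap V p + lam * V p = 0)
    (hbd : ∀ x, b₁ ≤ x → V (x, b₂) = 0 ∧ V (x, b₃) = 0)
    (n : ℤ) {μ : ℂ} (hμ : μ ^ 2 = (Real.pi * n / (b₃ - b₂) : ℝ) ^ 2 - lam) (hμ0 : μ ≠ 0)
    {x h : ℝ} (hh : 0 ≤ h) (hx : b₁ < x - h) :
    moment V n b₂ (b₃ - b₂) (x + h) + moment V n b₂ (b₃ - b₂) (x - h)
      = (Complex.exp (μ * h) + Complex.exp (-(μ * h))) * moment V n b₂ (b₃ - b₂) x := by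
  have hL : 0 < b₃ - b₂ := sub_pos.2 hb
  have hm := continuous_moment hVc n
  let m : ℝ → ℝ → ℂ := fun e y => moment V n (b₂ + e) (b₃ - b₂ - 2 * e) y
  have hmc : Continuous fun q : ℝ × ℝ => m q.1 q.2 :=
    hm.comp (f := fun q : ℝ × ℝ => (b₂ + q.1, b₃ - b₂ - 2 * q.1, q.2)) (by fun_prop)
  let R : ℝ → ℝ → ℂ := fun e y =>
    ((Real.pi * n / (b₃ - b₂ - 2 * e) : ℝ) ^ 2 - (Real.pi * n / (b₃ - b₂) : ℝ) ^ 2) * m e y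
      + momentForcing V n (b₂ + e) (b₃ - b₂ - 2 * e) y
  have hR : ∀ y, b₁ ≤ y → ∀ δ > 0, ∀ᶠ z : ℝ × ℝ in nhds (0, y), ‖R z.1 z.2‖ ≤ δ := by
    intro y hy δ hδ
    have hc : ContinuousAt (fun z : ℝ × ℝ => R z.1 z.2) (0, y) := by
      have hne : b₃ - b₂ - 2 * ((0:ℝ), y).1 ≠ 0 := by simpa using hL.ne'
      have hne2 : (b₃ - b₂ - 2 * ((0:ℝ), y).1) ^ 2 ≠ 0 := pow_ne_zero 2 hne
      have e1 : ContinuousAt (fun z : ℝ × ℝ => Real.pi * n / (b₃ - b₂ - 2 * z.1)) (0, y) :=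
        ContinuousAt.div (by fun_prop) (by fun_prop) hne
      have e2 : ContinuousAt (fun z : ℝ × ℝ => Real.pi * n / (b₃ - b₂ - 2 * z.1) ^ 2) (0, y) :=
        ContinuousAt.div (by fun_prop) (by fun_prop) hne2
      have e3 := Complex.continuous_ofReal.continuousAt.comp e1
      have e4 := Complex.continuous_ofReal.continuousAt.comp e2
      refine (((e3.pow 2).sub continuousAt_const).mul hmc.continuousAt).add (e4.mul ?_)
      fun_prop
    have h0 : R 0 y = 0 := by
      simp [R, momentForcing, (hbd y hy).1, (hbd y hy).2]
    have := hc.norm.eventually_lt (continuousAt_const (y := δ)) (by simpa [h0] using hδ)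
    exact this.mono fun z hz => hz.le
  let T : ℝ → ℂ := fun e =>
    2 * μ * (m e (x + h) + m e (x - h) - (Complex.exp (μ * h) + Complex.exp (-(μ * h))) * m e x)
  have hT : Continuous T := by
    have hs : ∀ y, Continuous fun e => m e y := fun y =>
      hmc.comp (f := fun e : ℝ => (e, y)) (by fun_prop)
    have s1 := hs (x + h)
    have s2 := hs (x - h)
    have s3 := hs x
    fun_prop
  set K : ℝ := 4 * Real.exp (‖μ‖ * h) * (Real.exp (‖μ‖ * h) * h)
  have hK : 0 ≤ K := by positivity
  have hTle : ∀ δ > 0, ‖T 0‖ ≤ K * δ := by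
    intro δ hδ
    have h1 : ∀ᶠ e in nhds (0:ℝ), ∀ y ∈ Icc (x - h) (x + h), ‖R e y‖ ≤ δ :=
      isCompact_Icc.eventually_forall_of_forall_eventually
        fun y hy => hR y (hx.le.trans hy.1) δ hδ
    have h2 : ∀ᶠ e in nhdsWithin (0:ℝ) (Ioi 0), ‖T e‖ ≤ K * δ := by
      filter_upwards [nhdsWithin_le_nhds h1, Ioo_mem_nhdsGT (half_pos hL)] with e he he0
      obtain ⟨f', hf'⟩ := moment_ode hV hH n (a := b₂ + e) (ℓ := b₃ - b₂ - 2 * e)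
        (by linarith [he0.2]) (by linarith [he0.1]) (by linarith [he0.1])
      refine norm_three_point_le hδ.le hh (f := m e) (f' := f') (r := R e)
        (fun y hy => (hf' y (hx.trans_le hy.1)).1) (fun y hy => ?_) he
      refine (hf' y (hx.trans_le hy.1)).2.congr_deriv ?_
      rw [hμ]
      simp only [R, m]
      ring
    exact le_of_tendsto ((hT.tendsto 0).mono_left nhdsWithin_le_nhds).norm h2
  have hT0 : ‖T 0‖ ≤ 0 := by
    have : Tendsto (fun δ : ℝ => K * δ) (nhdsWithin 0 (Ioi 0)) (nhds (K * 0)) :=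
      (Continuous.tendsto (by fun_prop) 0).mono_left nhdsWithin_le_nhds
    rw [mul_zero] at this
    exact ge_of_tendsto this (by filter_upwards [self_mem_nhdsWithin] with δ hδ using hTle δ hδ)
  have hz : T 0 = 0 := norm_le_zero_iff.1 hT0
  simp only [T, m, add_zero, mul_zero, sub_zero, mul_eq_zero, OfNat.ofNat_ne_zero, hμ0,
    false_or] at hz
  exact sub_eq_zero.1 hz

/-! ### Square-integrability selects the decaying exponential -/

/-- A continuous function on a half-line satisfying the three-point identity of `f'' = μ² f` with
`Re μ > 0` and square-integrable is a multiple of `e^{-μ x}`. -/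
lemma eq_exp_of_three_point {b : ℝ} {c : ℝ → ℂ} (hc : Continuous c)
    (hi : IntegrableOn (fun x => ‖c x‖ ^ 2) (Ioi b)) {μ : ℂ} (hμ : 0 < μ.re)
    (h3 : ∀ x h, 0 ≤ h → b < x - h →
      c (x + h) + c (x - h) = (Complex.exp (μ * h) + Complex.exp (-(μ * h))) * c x)
    {x : ℝ} (hx : b ≤ x) : c x = c b * Complex.exp (-μ * (x - b)) := by
  rcases hx.eq_or_lt with rfl | hx
  · simp
  set h := x - b with hh
  have hpos : 0 < h := sub_pos.2 hx
  set E := Complex.exp (μ * h) with hE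
  set E' := Complex.exp (-(μ * h)) with hE'
  have hEE : E * E' = 1 := by rw [hE, hE', ← Complex.exp_add]; simp
  have hEn : 1 < ‖E‖ := by
    rw [hE, Complex.norm_exp, Real.one_lt_exp_iff]
    simpa using mul_pos hμ hpos
  let D : ℝ → ℂ := fun y => c (y + h) - E' * c y
  have hDc : Continuous D := by fun_prop
  -- The increment `D` removes the decaying mode, so a translation multiplies it by `E`.
  have hD : ∀ y, b < y → D (y + h) = E * D y := by
    intro y hy
    have := h3 (y + h) h hpos.le (by linarith)
    rw [add_sub_cancel_right] at this
    simp only [D]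
    linear_combination this + c y * hEE
  have hshift : ∀ g : ℝ → ℝ, IntegrableOn g (Ioi b) →
      IntegrableOn (fun y => g (y + h)) (Ioi b) ∧
      ∫ y in Ioi b, g (y + h) = ∫ y in Ioi (b + h), g y := by
    intro g hg
    have hmp : MeasurePreserving (fun y : ℝ => y + h) volume volume :=
      measurePreserving_add_right volume h
    have hemb : MeasurableEmbedding (fun y : ℝ => y + h) :=
      (Homeomorph.addRight h).measurableEmbedding
    have hpre : (fun y : ℝ => y + h) ⁻¹' Ioi (b + h) = Ioi b := by ext y; simp
    constructor
    · have := (hmp.integrableOn_comp_preimage hemb (f := g) (s := Ioi (b + h))).2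
        (hg.mono_set (Ioi_subset_Ioi (by linarith)))
      rwa [hpre] at this
    · have := hmp.setIntegral_preimage_emb hemb g (Ioi (b + h))
      rwa [hpre] at this
  have hDi : IntegrableOn (fun y => ‖D y‖ ^ 2) (Ioi b) := by
    have h1 := (hshift _ hi).1
    have h2 : IntegrableOn (fun y => 2 * ‖c (y + h)‖ ^ 2 + 2 * (‖E'‖ ^ 2 * ‖c y‖ ^ 2)) (Ioi b) :=
      (h1.const_mul 2).add ((hi.const_mul _).const_mul 2)
    refine Integrable.mono' h2 (by fun_prop) (Eventually.of_forall fun y => ?_)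
    rw [Real.norm_of_nonneg (by positivity)]
    have : ‖D y‖ ≤ ‖c (y + h)‖ + ‖E'‖ * ‖c y‖ := by
      rw [← norm_mul]; exact norm_sub_le _ _
    nlinarith [sq_nonneg (‖c (y + h)‖ - ‖E'‖ * ‖c y‖), norm_nonneg (D y)]
  have hint : ‖E‖ ^ 2 * ∫ y in Ioi b, ‖D y‖ ^ 2 ≤ ∫ y in Ioi b, ‖D y‖ ^ 2 := by
    calc ‖E‖ ^ 2 * ∫ y in Ioi b, ‖D y‖ ^ 2 = ∫ y in Ioi b, ‖D (y + h)‖ ^ 2 := by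
          rw [← integral_const_mul]
          refine setIntegral_congr_fun measurableSet_Ioi fun y hy => ?_
          simp only [hD y hy, norm_mul, mul_pow]
      _ = ∫ y in Ioi (b + h), ‖D y‖ ^ 2 := (hshift _ hDi).2
      _ ≤ ∫ y in Ioi b, ‖D y‖ ^ 2 :=
          setIntegral_mono_set hDi (Eventually.of_forall fun y => by positivity)
            (Ioi_subset_Ioi (by linarith)).eventuallyLE
  have hI0 : ∫ y in Ioi b, ‖D y‖ ^ 2 = 0 := by
    have h0 : 0 ≤ ∫ y in Ioi b, ‖D y‖ ^ 2 := integral_nonneg fun y => by positivity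
    have h1 : 1 < ‖E‖ ^ 2 := one_lt_pow₀ hEn two_ne_zero
    nlinarith
  have hae : (fun y => D y) =ᵐ[volume.restrict (Ioi b)] fun _ => 0 := by
    have := (integral_eq_zero_iff_of_nonneg (fun y => by positivity) hDi).1 hI0
    filter_upwards [this] with y hy
    simpa using hy
  have hz : EqOn D (fun _ => 0) (closure (Ioi b)) :=
    (Measure.eqOn_open_of_ae_eq hae isOpen_Ioi hDc.continuousOn continuousOn_const).closure
      hDc continuous_const
  have hDb : D b = 0 := hz (by rw [closure_Ioi]; exact mem_Ici.2 le_rfl)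
  simp only [D] at hDb
  have hbx : b + h = x := by rw [hh]; ring
  rw [hbx, sub_eq_zero] at hDb
  rw [hDb, hE', mul_comm, hh]
  push_cast
  ring_nf

/-- Jensen's inequality for the square on the unit interval. -/
lemma sq_integral_unit_le {g : ℝ → ℝ} (hg : Continuous g) :
    (∫ s in (0:ℝ)..1, g s) ^ 2 ≤ ∫ s in (0:ℝ)..1, g s ^ 2 := by
  set m := ∫ s in (0:ℝ)..1, g s with hm
  have h : 0 ≤ ∫ s in (0:ℝ)..1, (g s - m) ^ 2 :=
    intervalIntegral.integral_nonneg zero_le_one fun s _ => sq_nonneg _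
  have e : ∀ s, (g s - m) ^ 2 = g s ^ 2 - (2 * m * g s - m ^ 2) := fun s => by ring
  simp_rw [e] at h
  rw [intervalIntegral.integral_sub ((by fun_prop : Continuous _).intervalIntegrable _ _)
    ((by fun_prop : Continuous _).intervalIntegrable _ _),
    intervalIntegral.integral_sub ((by fun_prop : Continuous _).intervalIntegrable _ _)
    ((by fun_prop : Continuous _).intervalIntegrable _ _),
    intervalIntegral.integral_const_mul, intervalIntegral.integral_const, ← hm] at h
  simp only [sub_zero, one_smul] at h
  nlinarith

lemma integrableOn_sq_moment {b₁ b₂ b₃ : ℝ} (hb : b₂ < b₃) {V : ℝ × ℝ → ℂ} (hVc : Continuous V)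
    (hL2 : IntegrableOn (fun p => ‖V p‖ ^ 2) (halfStrip b₁ b₂ b₃)) (n : ℤ) :
    IntegrableOn (fun x => ‖moment V n b₂ (b₃ - b₂) x‖ ^ 2) (Ioi b₁) := by
  have hL : 0 < b₃ - b₂ := sub_pos.2 hb
  have hF : Integrable (fun x => ∫ t in Ioo b₂ b₃, ‖V (x, t)‖ ^ 2) (volume.restrict (Ioi b₁)) := by
    rw [IntegrableOn, halfStrip, Measure.volume_eq_prod, ← Measure.prod_restrict] at hL2
    exact hL2.integral_prod_left
  have hmc : Continuous fun x => moment V n b₂ (b₃ - b₂) x :=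
    (continuous_moment hVc n).comp (f := fun x : ℝ => (b₂, b₃ - b₂, x)) (by fun_prop)
  refine Integrable.mono' (hF.const_mul (b₃ - b₂)⁻¹) (by fun_prop)
    (Eventually.of_forall fun x => ?_)
  rw [Real.norm_of_nonneg (by positivity)]
  have e1 : ‖moment V n b₂ (b₃ - b₂) x‖ ≤ ∫ s in (0:ℝ)..1, ‖V (x, b₂ + (b₃ - b₂) * s)‖ := by
    refine intervalIntegral.norm_integral_le_of_norm_le zero_le_one
      (Eventually.of_forall fun s _ => ?_)
      ((by fun_prop : Continuous _).intervalIntegrable _ _)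
    rw [norm_mul, Complex.norm_real]
    exact mul_le_of_le_one_right (norm_nonneg _) (Real.abs_sin_le_one _)
  have e2 := sq_integral_unit_le (g := fun s => ‖V (x, b₂ + (b₃ - b₂) * s)‖) (by fun_prop)
  have e3 : ∫ s in (0:ℝ)..1, ‖V (x, b₂ + (b₃ - b₂) * s)‖ ^ 2
      = (b₃ - b₂)⁻¹ * ∫ t in Ioo b₂ b₃, ‖V (x, t)‖ ^ 2 := by
    rw [intervalIntegral.integral_comp_add_mul (fun t => ‖V (x, t)‖ ^ 2) hL.ne' b₂, smul_eq_mul,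
      ← integral_Ioc_eq_integral_Ioo, ← intervalIntegral.integral_of_le hb.le]
    congr 2 <;> ring
  rw [← e3]
  exact (pow_le_pow_left₀ (norm_nonneg _) e1 2).trans e2

/-! ### The decay rates -/

lemma csqrt_sq (z : ℂ) : csqrt z ^ 2 = z := by
  rw [csqrt, one_div]
  exact_mod_cast Complex.cpow_nat_inv_pow z two_ne_zero

lemma csqrt_re_nonneg (z : ℂ) : 0 ≤ (csqrt z).re := by
  rcases eq_or_ne z 0 with rfl | hz
  · simp [csqrt]
  rw [csqrt, Complex.cpow_def_of_ne_zero hz, Complex.exp_re]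
  refine mul_nonneg (Real.exp_pos _).le (Real.cos_nonneg_of_mem_Icc ?_)
  have e : (Complex.log z * (1 / 2)).im = z.arg / 2 := by
    rw [show (1 / 2 : ℂ) = ((1 / 2 : ℝ) : ℂ) by push_cast; rfl, Complex.im_mul_ofReal,
      Complex.log_im]
    ring
  rw [e]
  constructor <;> linarith [Complex.neg_pi_lt_arg z, Complex.arg_le_pi z]

lemma re_le_csqrt_re_sq (z : ℂ) : z.re ≤ (csqrt z).re ^ 2 := by
  have h := congrArg Complex.re (csqrt_sq z)
  rw [pow_two, Complex.mul_re] at h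
  nlinarith [sq_nonneg (csqrt z).im]

/-- The square root `√(q - λ)` has positive real part: a purely imaginary root would give
`λ = q + (Im)² ≥ 1`. -/
lemma csqrt_re_pos {lam : ℂ} (hlam : ∀ t : ℝ, 1 ≤ t → lam ≠ (t : ℂ)) {q : ℝ} (hq : 1 ≤ q) :
    0 < (csqrt (q - lam)).re := by
  refine (csqrt_re_nonneg _).lt_of_ne' fun h0 => ?_
  set w := csqrt (q - lam) with hw
  have h : w ^ 2 = q - lam := csqrt_sq _
  refine hlam (q + w.im ^ 2) (by nlinarith [sq_nonneg w.im]) ?_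
  have hwi : w = w.im * Complex.I := by
    apply Complex.ext <;> simp [h0]
  rw [hwi] at h
  push_cast
  linear_combination h - (w.im : ℂ) ^ 2 * Complex.I_sq

/-- Bounded coefficients times the decaying exponentials at a positive distance `y` from the edge
are summable, since `Re √(k²(j+1)² - λ) ≥ k(j+1)/2` for large `j`. -/
lemma summable_decay {k y M : ℝ} (hk : 0 < k) (hy : 0 < y) (lam : ℂ) {α : ℕ → ℂ}
    (hα : ∀ j, ‖α j‖ ≤ M) (q : ℕ → ℝ) (hq : ∀ j : ℕ, q j = (k * (j + 1)) ^ 2) :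
    Summable fun j : ℕ => ‖α j * Complex.exp (-(csqrt (q j - lam)) * y)‖ := by
  have hM : 0 ≤ M := (norm_nonneg _).trans (hα 0)
  have hg : Summable fun j : ℕ => M * Real.exp (-(k / 2 * y)) ^ (j + 1) :=
    (((summable_nat_add_iff 1).2 (summable_geometric_of_lt_one (Real.exp_pos _).le
      (Real.exp_lt_one_iff.2 (by have := mul_pos hk hy; linarith))))).mul_left M
  refine Summable.of_norm_bounded_eventually_nat hg ?_
  have ht : Tendsto (fun j : ℕ => 3 / 4 * (k * ((j : ℝ) + 1)) ^ 2) atTop atTop := by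
    refine Tendsto.const_mul_atTop (by norm_num) ((tendsto_pow_atTop two_ne_zero).comp ?_)
    exact Tendsto.const_mul_atTop hk
      (tendsto_atTop_add_const_right _ _ tendsto_natCast_atTop_atTop)
  filter_upwards [ht.eventually_ge_atTop lam.re] with j hj
  rw [norm_norm, norm_mul, Complex.norm_exp, ← Real.exp_nat_mul]
  refine mul_le_mul (hα j) (Real.exp_le_exp.2 ?_) (Real.exp_pos _).le hM
  have h1 : k / 2 * ((j : ℝ) + 1) ≤ (csqrt (q j - lam)).re := by
    refine abs_le_of_sq_le_sq' ?_ (csqrt_re_nonneg _) |>.2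
    refine le_trans ?_ (re_le_csqrt_re_sq _)
    rw [Complex.sub_re, Complex.ofReal_re, hq]
    nlinarith
  rw [Complex.re_mul_ofReal, Complex.neg_re]
  push_cast
  nlinarith

/-! ### The expansion -/

lemma sineCoeff_eq_moment (V : ℝ × ℝ → ℂ) (a ℓ x : ℝ) (n : ℤ) :
    sineCoeff (fun s => V (x, a + ℓ * s)) n = 2 * moment V n a ℓ x := rfl

/-- The expansion for a globally continuous `V`, with `s ∈ [0, 1]` as the transverse variable:
the sine coefficients at `x₁` are those at `b₁` times the decaying exponentials. -/
lemma expansion {b₁ b₂ b₃ : ℝ} (hb : b₂ < b₃) (hπ : b₃ - b₂ ≤ Real.pi)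
    {lam : ℂ} (hlam : ∀ t : ℝ, 1 ≤ t → lam ≠ (t : ℂ)) {V : ℝ × ℝ → ℂ}
    (hVc : Continuous V) (hV : ContDiffOn ℝ (⊤ : ℕ∞) V (halfStrip b₁ b₂ b₃))
    (hL2 : IntegrableOn (fun p => ‖V p‖ ^ 2) (halfStrip b₁ b₂ b₃))
    (hH : ∀ p ∈ halfStrip b₁ b₂ b₃, lap V p + lam * V p = 0)
    (hbd : ∀ x, b₁ ≤ x → V (x, b₂) = 0 ∧ V (x, b₃) = 0)
    {x₁ s : ℝ} (hx : b₁ < x₁) (hs : s ∈ Icc (0:ℝ) 1)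
    (q : ℕ → ℝ) (hq : ∀ j : ℕ, q j = (Real.pi / (b₃ - b₂) * (j + 1)) ^ 2)
    (α : ℕ → ℂ) (hα : ∀ j : ℕ, α j = sineCoeff (fun s => V (b₁, b₂ + (b₃ - b₂) * s)) (j + 1)) :
    Summable (fun j : ℕ => ‖α j * Complex.exp (-(csqrt (q j - lam)) * (x₁ - b₁ : ℝ)) *
        (Real.sin (Real.pi * (j + 1) * s) : ℂ)‖) ∧
    HasSum (fun j : ℕ => α j * Complex.exp (-(csqrt (q j - lam)) * (x₁ - b₁ : ℝ)) *
        (Real.sin (Real.pi * (j + 1) * s) : ℂ)) (V (x₁, b₂ + (b₃ - b₂) * s)) := by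
  have hL : 0 < b₃ - b₂ := sub_pos.2 hb
  have hk : 0 < Real.pi / (b₃ - b₂) := div_pos Real.pi_pos hL
  have hk1 : 1 ≤ Real.pi / (b₃ - b₂) := (one_le_div hL).2 hπ
  have hq1 : ∀ j, 1 ≤ q j := by
    intro j
    rw [hq]
    refine one_le_pow₀ (one_le_mul_of_one_le_of_one_le hk1 ?_)
    have : (0:ℝ) ≤ j := j.cast_nonneg
    linarith
  have hμ : ∀ j, 0 < (csqrt (q j - lam)).re := fun j => csqrt_re_pos hlam (hq1 j)
  have hcoef : ∀ j : ℕ, sineCoeff (fun s => V (x₁, b₂ + (b₃ - b₂) * s)) (j + 1)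
      = α j * Complex.exp (-(csqrt (q j - lam)) * (x₁ - b₁ : ℝ)) := by
    intro j
    have hmc : Continuous fun x => moment V (j + 1) b₂ (b₃ - b₂) x :=
      (continuous_moment hVc _).comp (f := fun x : ℝ => (b₂, b₃ - b₂, x)) (by fun_prop)
    have := eq_exp_of_three_point hmc (integrableOn_sq_moment hb hVc hL2 (j + 1)) (hμ j)
      (fun x h hh hxh => moment_three_point hb hVc hV hH hbd (j + 1) (μ := csqrt (q j - lam))
        (by
          rw [csqrt_sq, hq]
          push_cast
          ring)
        (fun h0 => (hμ j).ne' (by rw [h0]; rfl)) hh hxh) hx.le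
    rw [hα, sineCoeff_eq_moment, sineCoeff_eq_moment, this, Complex.ofReal_sub, mul_assoc]
  have hbdd : ∃ M, ∀ j, ‖α j‖ ≤ M := by
    have h2 := hasSum_sq_sineCoeff (f := fun s => V (b₁, b₂ + (b₃ - b₂) * s)) (by fun_prop)
      (by simpa using (hbd b₁ le_rfl).1)
    refine ⟨√(2 * ∫ s in (0:ℝ)..1, ‖V (b₁, b₂ + (b₃ - b₂) * s)‖ ^ 2),
      fun j => Real.le_sqrt_of_sq_le ?_⟩
    rw [hα]
    exact le_hasSum h2 j fun i _ => by positivity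
  obtain ⟨M, hM⟩ := hbdd
  have hsum := summable_decay hk (sub_pos.2 hx) lam hM q hq
  constructor
  · refine hsum.of_nonneg_of_le (fun j => norm_nonneg _) fun j => ?_
    rw [norm_mul _ (Complex.ofReal _), Complex.norm_real]
    exact mul_le_of_le_one_right (norm_nonneg _) (Real.abs_sin_le_one _)
  · have := hasSum_sineSeries (f := fun s => V (x₁, b₂ + (b₃ - b₂) * s)) (by fun_prop)
      (by simpa using (hbd x₁ hx.le).1) (by simpa using (hbd x₁ hx.le).2)
      (by simpa only [hcoef] using hsum) hs
    simpa only [hcoef, Int.cast_add, Int.cast_natCast, Int.cast_one] using this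

/-- The nearest point projection of the plane onto the closed half-strip (for `b₂ ≤ b₃`).
Composition with it extends a continuous function on the closed half-strip continuously to the
plane. -/
def clampStrip (b₁ b₂ b₃ : ℝ) (p : ℝ × ℝ) : ℝ × ℝ := (max b₁ p.1, max b₂ (min b₃ p.2))

lemma clampStrip_of_mem {b₁ b₂ b₃ : ℝ} {p : ℝ × ℝ} (hp : p ∈ Ici b₁ ×ˢ Icc b₂ b₃) :
    clampStrip b₁ b₂ b₃ p = p := by
  obtain ⟨h1, h2, h3⟩ := hp
  rw [mem_Ici] at h1
  simp [clampStrip, h1, h2, h3]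

lemma closure_halfStrip {b₁ b₂ b₃ : ℝ} (hb : b₂ < b₃) :
    closure (halfStrip b₁ b₂ b₃) = Ici b₁ ×ˢ Icc b₂ b₃ := by
  rw [halfStrip, closure_prod_eq, closure_Ioi, closure_Ioo hb.ne]

lemma continuous_comp_clampStrip {b₁ b₂ b₃ : ℝ} (hb : b₂ < b₃) {v : ℝ × ℝ → ℂ}
    (hv : ContinuousOn v (closure (halfStrip b₁ b₂ b₃))) :
    Continuous fun p => v (clampStrip b₁ b₂ b₃ p) := by
  refine hv.comp_continuous (by unfold clampStrip; fun_prop) fun p => ?_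
  rw [closure_halfStrip hb]
  exact ⟨mem_Ici.2 (le_max_left _ _), le_max_left _ _, max_le hb.le (min_le_left _ _)⟩

lemma lap_congr {f g : ℝ × ℝ → ℂ} {p : ℝ × ℝ} (h : f =ᶠ[nhds p] g) : lap f p = lap g p := by
  have h1 : ∀ e : ℝ × ℝ, (fun q => fderiv ℝ f q e) =ᶠ[nhds p] fun q => fderiv ℝ g q e := by
    intro e
    filter_upwards [h.fderiv (𝕜 := ℝ)] with q hq
    rw [hq]
  rw [lap, lap, (h1 _).fderiv_eq, (h1 _).fderiv_eq]

/-- Lemma 3.12: Fourier sine-series expansion of square-integrable solutions of the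
Helmholtz equation in a half-strip with Dirichlet lateral boundary conditions. -/
theorem stmt0
    (b₁ b₂ b₃ : ℝ) (hb : b₂ < b₃) (hπ : b₃ - b₂ ≤ Real.pi)
    (lam : ℂ) (hlam : ∀ t : ℝ, 1 ≤ t → lam ≠ (t : ℂ))
    (Ω : Set (ℝ × ℝ)) (hΩ : Ω = {p : ℝ × ℝ | b₁ < p.1 ∧ b₂ < p.2 ∧ p.2 < b₃})
    (v : ℝ × ℝ → ℂ)
    (hsmooth : ContDiffOn ℝ (⊤ : ℕ∞) v Ω)
    (hcont : ContinuousOn v (closure Ω))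
    (hL2 : IntegrableOn (fun p => ‖v p‖ ^ 2) Ω)
    (hL2grad : IntegrableOn (fun p => ‖fderiv ℝ v p‖ ^ 2) Ω)
    (hHelm : ∀ p ∈ Ω, lap v p + lam * v p = 0)
    (hbdry : ∀ x₁ : ℝ, b₁ ≤ x₁ → v (x₁, b₂) = 0 ∧ v (x₁, b₃) = 0)
    (α : ℕ → ℂ)
    (hα : ∀ j : ℕ, α j = (2 / (b₃ - b₂)) *
      ∫ t in b₂..b₃, v (b₁, t) *
        Real.sin (Real.pi * (j + 1) * (t - b₂) / (b₃ - b₂))) :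
    (∀ x₁ x₂ : ℝ, b₁ < x₁ → b₂ ≤ x₂ → x₂ ≤ b₃ →
      Summable (fun j : ℕ => ‖α j *
          Complex.exp (-(csqrt ((Real.pi ^ 2 * ((j : ℝ) + 1) ^ 2 / (b₃ - b₂) ^ 2 : ℝ) - lam))
            * ((x₁ : ℂ) - b₁)) *
          Real.sin (Real.pi * ((j : ℝ) + 1) * (x₂ - b₂) / (b₃ - b₂))‖) ∧
      HasSum (fun j : ℕ => α j *
          Complex.exp (-(csqrt ((Real.pi ^ 2 * ((j : ℝ) + 1) ^ 2 / (b₃ - b₂) ^ 2 : ℝ) - lam))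
            * ((x₁ : ℂ) - b₁)) *
          Real.sin (Real.pi * ((j : ℝ) + 1) * (x₂ - b₂) / (b₃ - b₂))) (v (x₁, x₂))) ∧
    (∃ S : ℝ, HasSum (fun j : ℕ => ‖α j‖ ^ 2) S ∧
      ((b₃ - b₂) / 2) * S = ∫ t in b₂..b₃, ‖v (b₁, t)‖ ^ 2) := by
  have hL : 0 < b₃ - b₂ := sub_pos.2 hb
  obtain rfl : Ω = halfStrip b₁ b₂ b₃ := by
    rw [hΩ]
    ext p
    simp [halfStrip]
  set V : ℝ × ℝ → ℂ := fun p => v (clampStrip b₁ b₂ b₃ p) with hVdef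
  have hVc : Continuous V := continuous_comp_clampStrip hb hcont
  have hVv : ∀ x t, b₁ ≤ x → t ∈ Icc b₂ b₃ → V (x, t) = v (x, t) := fun x t hx ht => by
    simp only [hVdef, clampStrip_of_mem (mk_mem_prod (mem_Ici.2 hx) ht)]
  have hVo : EqOn V v (halfStrip b₁ b₂ b₃) := fun p hp =>
    hVv p.1 p.2 hp.1.le ⟨hp.2.1.le, hp.2.2.le⟩
  have hVloc : ∀ p ∈ halfStrip b₁ b₂ b₃, V =ᶠ[nhds p] v := fun p hp =>
    hVo.eventuallyEq_of_mem ((isOpen_halfStrip b₁ b₂ b₃).mem_nhds hp)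
  have hV : ContDiffOn ℝ (⊤ : ℕ∞) V (halfStrip b₁ b₂ b₃) := hsmooth.congr hVo
  have hVL2 : IntegrableOn (fun p => ‖V p‖ ^ 2) (halfStrip b₁ b₂ b₃) :=
    hL2.congr_fun (fun p hp => by simp only [hVo hp]) (isOpen_halfStrip b₁ b₂ b₃).measurableSet
  have hVH : ∀ p ∈ halfStrip b₁ b₂ b₃, lap V p + lam * V p = 0 := fun p hp => by
    rw [lap_congr (hVloc p hp), hVo hp, hHelm p hp]
  have hVbd : ∀ x, b₁ ≤ x → V (x, b₂) = 0 ∧ V (x, b₃) = 0 := fun x hx => by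
    rw [hVv _ _ hx ⟨le_rfl, hb.le⟩, hVv _ _ hx ⟨hb.le, le_rfl⟩]
    exact hbdry x hx
  have hαV : ∀ j : ℕ, α j = sineCoeff (fun s => V (b₁, b₂ + (b₃ - b₂) * s)) (j + 1) := by
    intro j
    rw [hα, sineCoeff]
    have e1 : ∫ t in b₂..b₃, v (b₁, t) *
          (Real.sin (Real.pi * (j + 1) * (t - b₂) / (b₃ - b₂)) : ℂ)
        = ∫ t in b₂..b₃, V (b₁, t) *
          (Real.sin (Real.pi * (j + 1) * ((t - b₂) / (b₃ - b₂))) : ℂ) := by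
      refine intervalIntegral.integral_congr fun t ht => ?_
      rw [uIcc_of_le hb.le] at ht
      simp only [hVv b₁ t le_rfl ht, mul_div_assoc]
    have e2 := intervalIntegral.integral_comp_add_mul (a := 0) (b := 1) (fun t => V (b₁, t) *
          (Real.sin (Real.pi * (j + 1) * ((t - b₂) / (b₃ - b₂))) : ℂ)) hL.ne' b₂
    simp only [add_sub_cancel_left, mul_div_cancel_left₀ _ hL.ne', mul_zero, add_zero, mul_one,
      add_sub_cancel] at e2
    rw [e1]
    push_cast at e2 ⊢
    rw [e2, Complex.real_smul]
    push_cast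
    ring
  constructor
  · intro x₁ x₂ hx₁ h2 h3
    have hs : (x₂ - b₂) / (b₃ - b₂) ∈ Icc (0:ℝ) 1 :=
      ⟨div_nonneg (sub_nonneg.2 h2) hL.le, (div_le_one hL).2 (by linarith)⟩
    have := expansion hb hπ hlam hVc hV hVL2 hVH hVbd hx₁ hs
      (fun j : ℕ => Real.pi ^ 2 * ((j : ℝ) + 1) ^ 2 / (b₃ - b₂) ^ 2) (fun j => by field_simp) α hαV
    rw [mul_div_cancel₀ _ hL.ne', add_sub_cancel, hVv _ _ hx₁.le ⟨h2, h3⟩] at this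
    simpa only [mul_div_assoc, Complex.ofReal_sub] using this
  · refine ⟨2 * ∫ s in (0:ℝ)..1, ‖V (b₁, b₂ + (b₃ - b₂) * s)‖ ^ 2, ?_, ?_⟩
    · simpa only [← hαV] using hasSum_sq_sineCoeff
        (f := fun s => V (b₁, b₂ + (b₃ - b₂) * s)) (by fun_prop)
        (by simpa using (hVbd b₁ le_rfl).1)
    · rw [intervalIntegral.integral_comp_add_mul (fun t => ‖V (b₁, t)‖ ^ 2) hL.ne' b₂, smul_eq_mul,
        mul_zero, add_zero, mul_one, add_sub_cancel]
      have : ∫ t in b₂..b₃, ‖V (b₁, t)‖ ^ 2 = ∫ t in b₂..b₃, ‖v (b₁, t)‖ ^ 2 := by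
        refine intervalIntegral.integral_congr fun t ht => ?_
        rw [uIcc_of_le hb.le] at ht
        simp only [hVv b₁ t le_rfl ht]
      rw [this]
      field_simp

end
end

section
/- Let 0 < d ≤ π, a > 0, and λ ∈ ℂ \ [1,+∞). Suppose ψ : ℝ² → ℂ is continuous on the closed strip {(x₁,x₂) : −d ≤ x₂ ≤ π}, smooth on Π_a, ψ and its gradient are square-integrable over Π_a, Δψ + λψ = 0 holds on Π_a, and ψ vanishes on Γ_a (that is, ψ(x₁,π) = ψ(x₁,−d) = 0 for all x₁, and ψ(x₁,0) = 0 for |x₁| ≥ a). Then there exist c₊ ∈ ℂ and C > 0 such that for all x₁ ≥ a + 1 and 0 ≤ x₂ ≤ π: |ψ(x₁,x₂) − c₊·e^{−√(1−λ)·x₁}·sin x₂| ≤ C·e^{−Re√(4−λ)·x₁}, and moreover the gradient of the function (x₁,x₂) ↦ ψ(x₁,x₂) − c₊·e^{−√(1−λ)·x₁}·sin x₂ also satisfies |∇(ψ − c₊ e^{−√(1−λ)x₁} sin x₂)(x₁,x₂)| ≤ C·e^{−Re√(4−λ)·x₁} on the same region. -/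
/-!
In the upper half-channel `x₁ > a` the solution satisfies `Δψ + λψ = 0` with Dirichlet conditions on
both walls, so it is a superposition of the separated solutions `e^{±μ_k x₁} sin (k x₂)` with
`μ_k = √(k² - λ)`. Here `Re μ_k > 0` because `λ ∉ [1, ∞)`, and square integrability excludes the
growing exponentials. Splitting off the mode `k = 1` leaves a series dominated by the mode `k = 2`.

*Coefficients.* Let `b_k(x) = ∫₀^π ψ(x, s) sin (ks) ds`. Formally `b_k'' = μ_k² b_k`, but `ψ` is only
continuous up to the walls, so the integrations by parts are not available on the full cross section.
They are carried out on the cross section contracted by a factor `c < 1` about its midpoint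
(`contracted_mode`). Paired with `sin (ks)`, the normal derivative drops out of the boundary terms,
which contain values of `ψ` only, and these tend to `0` as `c → 1`. `limit_second_deriv` transfers
the equation to the limit: second derivatives converging pointwise and boundedly suffice. Then
`decaying_solution` gives `b_k(x) = b_k(a) e^{-μ_k (x - a)}`, the growing part being incompatible with
`‖b_k(x)‖ ≤ π + ∫₀^π ‖ψ(x, s)‖² ds`, whose second term is integrable in `x`. This is `mode_decay`.

*Expansion.* For `x₁ > a` these coefficients are summable in `k`, so `ψ(x₁, ·)` equals its sine
series on the closed section `[0, π]` (`hasSum_sine`, from the Fourier series of the odd extension).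
Hence `ψ` minus its first mode is the series of the modes `k ≥ 2` (`sub_first_mode_eq_tsum`).

*Tail.* As `Re μ_k` is increasing in `k` and grows like `k`, that series and its termwise gradient are
`O(e^{-Re μ_2 x₁})` for `x₁ ≥ a + 1` (`tail_bounds`). The series is differentiable on a half-plane that
contains the walls. At a wall point, either `ψ` has no derivative, in which case `fderiv` is `0` by
convention, or the derivative is determined by the values in the closed channel, a set of unique
differentiability, and therefore agrees with that of the series.
-/

open MeasureTheory Set Filter

noncomputable section

/-! ### Decay rates of the transversal modes -/

/-- The decay rate `μ_k = √(k² - λ)` of the `k`-th transversal mode, with the principal root. -/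
def mu (lam : ℂ) (k : ℕ) : ℂ := csqrt ((k : ℂ) ^ 2 - lam)

lemma csqrt_re_pos_s1 {z : ℂ} (hz : z ∈ Complex.slitPlane) : 0 < (csqrt z).re := by
  have hz0 : z ≠ 0 := Complex.slitPlane_ne_zero hz
  have harg := Complex.mem_slitPlane_iff_arg.1 hz
  unfold csqrt
  rw [Complex.cpow_def_of_ne_zero hz0, Complex.exp_re]
  apply mul_pos (Real.exp_pos _)
  have h : (Complex.log z * (1 / 2)).im = z.arg / 2 := by
    simp [Complex.mul_im, Complex.log_im]
    ring
  rw [h]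
  have h1 := Complex.neg_pi_lt_arg z
  have h2 := lt_of_le_of_ne (Complex.arg_le_pi z) harg.1
  exact Real.cos_pos_of_mem_Ioo ⟨by linarith, by linarith⟩

lemma mu_sq (lam : ℂ) (k : ℕ) : mu lam k ^ 2 = (k : ℂ) ^ 2 - lam := csqrt_sq _

lemma mu_re_pos {lam : ℂ} (hlam : ∀ t : ℝ, 1 ≤ t → lam ≠ (t : ℂ)) {k : ℕ} (hk : 1 ≤ k) :
    0 < (mu lam k).re := by
  apply csqrt_re_pos_s1
  rw [Complex.mem_slitPlane_iff]
  by_contra! h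
  obtain ⟨h1, h2⟩ := h
  have hk' : (1 : ℝ) ≤ k := by exact_mod_cast hk
  have e : (k : ℂ) ^ 2 = (((k : ℝ) ^ 2 : ℝ) : ℂ) := by push_cast; rfl
  rw [e] at h1 h2
  simp only [Complex.sub_re, Complex.sub_im, Complex.ofReal_re, Complex.ofReal_im] at h1 h2
  refine hlam lam.re (by nlinarith) ?_
  apply Complex.ext <;> simp
  linarith

lemma mu_re_im (lam : ℂ) (k : ℕ) :
    (mu lam k).re ^ 2 - (mu lam k).im ^ 2 = (k : ℝ) ^ 2 - lam.re ∧
    2 * ((mu lam k).re * (mu lam k).im) = - lam.im := by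
  have h := mu_sq lam k
  have e : (k : ℂ) ^ 2 = (((k : ℝ) ^ 2 : ℝ) : ℂ) := by push_cast; rfl
  rw [e, sq] at h
  have h1 := congrArg Complex.re h
  have h2 := congrArg Complex.im h
  simp only [Complex.sub_re, Complex.sub_im, Complex.ofReal_re, Complex.ofReal_im,
    Complex.mul_re, Complex.mul_im] at h1 h2
  constructor <;> linarith

/-- `Re μ` and `Im μ` have a product independent of the index, while `(Re μ)² - (Im μ)²` increases
with it; hence `Re μ` increases. -/
lemma mu_re_mono {lam : ℂ} (hlam : ∀ t : ℝ, 1 ≤ t → lam ≠ (t : ℂ)) {j k : ℕ} (hj : 1 ≤ j)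
    (hjk : j ≤ k) : (mu lam j).re ≤ (mu lam k).re := by
  have pj := mu_re_pos hlam hj
  have pk := mu_re_pos hlam (hj.trans hjk)
  obtain ⟨aj, bj⟩ := mu_re_im lam j
  obtain ⟨ak, bk⟩ := mu_re_im lam k
  have hjk' : (j : ℝ) ^ 2 ≤ (k : ℝ) ^ 2 := by gcongr
  by_contra! h
  set p := (mu lam j).re
  set q := (mu lam j).im
  set r := (mu lam k).re
  set s := (mu lam k).im
  have e : p * q = r * s := by linarith
  have h1 : r ^ 2 < p ^ 2 := by nlinarith
  have h2 : s ^ 2 < q ^ 2 := by linarith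
  have h3 : (p * q) ^ 2 = (r * s) ^ 2 := by rw [e]
  nlinarith [mul_pos pj pj, mul_pos pk pk, sq_nonneg s, sq_nonneg q]

lemma mu_re_ge {lam : ℂ} (hlam : ∀ t : ℝ, 1 ≤ t → lam ≠ (t : ℂ)) {k : ℕ} (hk : 1 ≤ k) :
    (k : ℝ) - (‖lam‖ + 1) ≤ (mu lam k).re := by
  have pk := mu_re_pos hlam hk
  obtain ⟨ak, bk⟩ := mu_re_im lam k
  have h0 : lam.re ≤ ‖lam‖ := Complex.re_le_norm lam
  have h1 := norm_nonneg lam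
  have hk' : (1 : ℝ) ≤ k := by exact_mod_cast hk
  by_contra! h
  have h2 : (mu lam k).re ^ 2 < ((k : ℝ) - (‖lam‖ + 1)) ^ 2 := by
    apply sq_lt_sq' <;> linarith
  nlinarith [sq_nonneg (mu lam k).im]

lemma mu_norm_le (lam : ℂ) (k : ℕ) : ‖mu lam k‖ ≤ k + (‖lam‖ + 1) := by
  have h : ‖mu lam k‖ ^ 2 ≤ (k : ℝ) ^ 2 + ‖lam‖ := by
    rw [← norm_pow, mu_sq]
    refine (norm_sub_le _ _).trans ?_
    simp
  have h1 := norm_nonneg lam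
  have hk : (0 : ℝ) ≤ k := Nat.cast_nonneg k
  by_contra! h'
  nlinarith

/-- The weights `(‖μ_k‖ + k) e^{-r Re μ_k}`, which majorise the gradients of the modes at distance `r`
into the channel, are summable over `k ≥ m + 1`, because `Re μ_k ≥ k - O(1)`. -/
lemma summable_mu {lam : ℂ} (hlam : ∀ t : ℝ, 1 ≤ t → lam ≠ (t : ℂ)) {r : ℝ} (hr : 0 < r) (m : ℕ) :
    Summable (fun k : ℕ => (‖mu lam (k + (m + 1))‖ + ((k + (m + 1) : ℕ) : ℝ)) *
      Real.exp (-(mu lam (k + (m + 1))).re * r)) := by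
  set L := ‖lam‖ + 1 with hL
  have hL0 : 0 < L := by positivity
  have h0 : Summable (fun k : ℕ => (2 * ((k : ℝ) ^ 1 * Real.exp (-r * k)) +
      L * ((k : ℝ) ^ 0 * Real.exp (-r * k))) * Real.exp (L * r)) :=
    (((Real.summable_pow_mul_exp_neg_nat_mul 1 hr).mul_left 2).add
      ((Real.summable_pow_mul_exp_neg_nat_mul 0 hr).mul_left L)).mul_right _
  refine Summable.of_nonneg_of_le (fun k => by positivity) (fun k => ?_)
    ((summable_nat_add_iff (m + 1)).2 h0)
  have h1 := mu_norm_le lam (k + (m + 1))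
  have h2 := mu_re_ge hlam (k := k + (m + 1)) (by omega)
  set n := k + (m + 1)
  have h3 : Real.exp (-(mu lam n).re * r) ≤ Real.exp (-r * n) * Real.exp (L * r) := by
    rw [← Real.exp_add]
    apply Real.exp_le_exp.2
    nlinarith
  calc _ ≤ (2 * (n : ℝ) + L) * (Real.exp (-r * n) * Real.exp (L * r)) := by
        exact mul_le_mul (by linarith) h3 (Real.exp_pos _).le (by positivity)
    _ = _ := by ring

/-! ### Ordinary differential equations on a half-line -/

/-- If `F n → f` pointwise on `[a, ∞)`, and the second derivatives of `F n` converge to `h`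
pointwise and locally boundedly there, then `f` coincides on `[a, ∞)` with a function whose second
derivative is `h`: subtracting the iterated integrals of the second derivatives leaves affine
functions, and a pointwise limit of affine functions is affine. -/
lemma limit_second_deriv {a : ℝ} {F F1 F2 : ℕ → ℝ → ℂ} {f h : ℝ → ℂ}
    (hF : ∀ n x, HasDerivAt (F n) (F1 n x) x) (hF1 : ∀ n x, HasDerivAt (F1 n) (F2 n x) x)
    (hF2 : ∀ n, Continuous (F2 n)) (hh : Continuous h)
    (hf : ∀ x, a ≤ x → Tendsto (fun n => F n x) atTop (nhds (f x)))
    (hlim : ∀ x, a ≤ x → Tendsto (fun n => F2 n x) atTop (nhds (h x)))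
    (hbd : ∀ X, ∃ C, ∀ n, ∀ x ∈ Icc a X, ‖F2 n x‖ ≤ C) :
    ∃ g g1 : ℝ → ℂ, (∀ x, HasDerivAt g (g1 x) x) ∧ (∀ x, HasDerivAt g1 (h x) x) ∧
      ∀ x, a ≤ x → g x = f x := by
  set H1 : ℝ → ℂ := fun x => ∫ t in a..x, h t with hH1
  have dH1 : ∀ x, HasDerivAt H1 (h x) x := fun x => (hh.integral_hasStrictDerivAt a x).hasDerivAt
  have cH1 : Continuous H1 := continuous_iff_continuousAt.2 fun x => (dH1 x).continuousAt
  set H : ℝ → ℂ := fun x => ∫ t in a..x, H1 t with hH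
  have dH : ∀ x, HasDerivAt H (H1 x) x := fun x => (cH1.integral_hasStrictDerivAt a x).hasDerivAt
  have cF1 : ∀ n, Continuous (F1 n) :=
    fun n => continuous_iff_continuousAt.2 fun x => (hF1 n x).continuousAt
  have i1 : ∀ n x, ∫ t in a..x, F2 n t = F1 n x - F1 n a := fun n x =>
    intervalIntegral.integral_eq_sub_of_hasDerivAt (fun t _ => hF1 n t)
      ((hF2 n).intervalIntegrable _ _)
  have i2 : ∀ n x, ∫ t in a..x, (F1 n t - F1 n a) = F n x - F n a - (x - a) * F1 n a := by
    intro n x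
    rw [intervalIntegral.integral_sub ((cF1 n).intervalIntegrable _ _)
      (continuous_const.intervalIntegrable _ _),
      intervalIntegral.integral_eq_sub_of_hasDerivAt (fun t _ => hF n t)
      ((cF1 n).intervalIntegrable _ _)]
    simp
  have l1 : ∀ x, a ≤ x → Tendsto (fun n => F1 n x - F1 n a) atTop (nhds (H1 x)) := by
    intro x hx
    obtain ⟨C, hC⟩ := hbd x
    simp_rw [← i1]
    apply intervalIntegral.tendsto_integral_filter_of_dominated_convergence (fun _ => C)
    · exact Eventually.of_forall fun n => (hF2 n).aestronglyMeasurable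
    · refine Eventually.of_forall fun n => Eventually.of_forall fun t ht => ?_
      rw [uIoc_of_le hx] at ht
      exact hC n t ⟨ht.1.le, ht.2⟩
    · exact continuous_const.intervalIntegrable _ _
    · refine Eventually.of_forall fun t ht => ?_
      rw [uIoc_of_le hx] at ht
      exact hlim t ht.1.le
  have l2 : ∀ x, a ≤ x →
      Tendsto (fun n => F n x - F n a - (x - a) * F1 n a) atTop (nhds (H x)) := by
    intro x hx
    obtain ⟨C, hC⟩ := hbd x
    simp_rw [← i2]
    apply intervalIntegral.tendsto_integral_filter_of_dominated_convergence (fun _ => C * (x - a))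
    · exact Eventually.of_forall fun n => ((cF1 n).sub continuous_const).aestronglyMeasurable
    · refine Eventually.of_forall fun n => Eventually.of_forall fun t ht => ?_
      rw [uIoc_of_le hx] at ht
      have hC0 : 0 ≤ C := (norm_nonneg _).trans (hC n t ⟨ht.1.le, ht.2⟩)
      rw [← i1]
      refine (intervalIntegral.norm_integral_le_of_norm_le_const (C := C) fun s hs => ?_).trans ?_
      · rw [uIoc_of_le ht.1.le] at hs
        exact hC n s ⟨hs.1.le, hs.2.trans ht.2⟩
      · rw [abs_of_nonneg (by linarith [ht.1])]
        gcongr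
        exact ht.2
    · exact continuous_const.intervalIntegrable _ _
    · refine Eventually.of_forall fun t ht => ?_
      rw [uIoc_of_le hx] at ht
      exact l1 t ht.1.le
  -- the slopes at `a` converge, as seen by evaluating at `a + 1`
  set β : ℂ := f (a + 1) - f a - H (a + 1)
  have lβ : Tendsto (fun n => F1 n a) atTop (nhds β) := by
    have := ((hf (a + 1) (by linarith)).sub (hf a le_rfl)).sub (l2 (a + 1) (by linarith))
    refine this.congr fun n => ?_
    push_cast
    ring
  refine ⟨fun x => f a + (x - a) * β + H x, fun x => β + H1 x, fun x => ?_, fun x => ?_,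
    fun x hx => ?_⟩
  · have e : HasDerivAt (fun x : ℝ => ((x : ℂ) - a)) 1 x := by
      simpa using (Complex.ofRealCLM.hasDerivAt (x := x)).sub_const (a : ℂ)
    exact (((e.mul_const β).const_add (f a)).add (dH x)).congr_deriv (by simp)
  · simpa using (dH1 x).const_add β
  · have h1 := (hf x hx).sub (hf a le_rfl)
    have h2 := l2 x hx
    have h3 := (lβ.const_mul ((x : ℂ) - a)).add h2
    have h4 := tendsto_nhds_unique (h1.congr fun n => by ring) h3
    linear_combination -h4

/-- A solution of `g'' = μ² g` on `[a, ∞)` with `Re μ > 0` that is dominated by an affine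
function of an integrable function is a multiple of the decaying exponential. -/
lemma decaying_solution {a : ℝ} {m : ℂ} (hm : 0 < m.re) {g g1 : ℝ → ℂ} {N : ℝ → ℝ} {D : ℝ}
    (hg : ∀ x, HasDerivAt g (g1 x) x) (hg1 : ∀ x, a ≤ x → HasDerivAt g1 (m ^ 2 * g x) x)
    (hN : IntegrableOn N (Ioi a)) (hgN : ∀ x, a < x → ‖g x‖ ≤ D + N x) :
    ∀ x, a ≤ x → g x = g a * Complex.exp (-m * (x - a)) := by
  have hm0 : m ≠ 0 := by rintro rfl; simp at hm
  have dE : ∀ (c : ℂ) (x : ℝ), HasDerivAt (fun x : ℝ => Complex.exp (c * (x - a)))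
      (c * Complex.exp (c * (x - a))) x := by
    intro c x
    have e : HasDerivAt (fun x : ℝ => c * ((x : ℂ) - a)) c x := by
      simpa using ((Complex.ofRealCLM.hasDerivAt (x := x)).sub_const (a : ℂ)).const_mul c
    simpa [mul_comm] using e.cexp
  have const : ∀ {G : ℝ → ℂ}, (∀ x, a ≤ x → HasDerivAt G 0 x) → ∀ x, a ≤ x → G x = G a := by
    intro G hG x hx
    exact constant_of_has_deriv_right_zero (a := a) (b := x)
      (fun y hy => (hG y hy.1).continuousAt.continuousWithinAt)
      (fun y hy => (hG y hy.1).hasDerivWithinAt) x ⟨hx, le_rfl⟩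
  -- the two first integrals of the equation
  have c1 : ∀ x, a ≤ x → (g1 x + m * g x) * Complex.exp (-m * (x - a)) = g1 a + m * g a := by
    intro x hx
    have := const (G := fun x : ℝ => (g1 x + m * g x) * Complex.exp (-m * (x - a)))
      (fun y hy => by
        refine (((hg1 y hy).add ((hg y).const_mul m)).mul (dE (-m) y)).congr_deriv ?_
        simp only [Pi.add_apply]; ring) x hx
    simpa using this
  have c2 : ∀ x, a ≤ x → (g1 x - m * g x) * Complex.exp (m * (x - a)) = g1 a - m * g a := by
    intro x hx
    have := const (G := fun x : ℝ => (g1 x - m * g x) * Complex.exp (m * (x - a)))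
      (fun y hy => by
        refine (((hg1 y hy).sub ((hg y).const_mul m)).mul (dE m y)).congr_deriv ?_
        simp only [Pi.sub_apply]; ring) x hx
    simpa using this
  have ee : ∀ x : ℝ, Complex.exp (m * (x - a)) * Complex.exp (-m * (x - a)) = 1 := by
    intro x
    rw [← Complex.exp_add]; simp
  set A := g1 a + m * g a with hA
  set B := g1 a - m * g a with hB
  have sol : ∀ x, a ≤ x → 2 * m * g x =
      A * Complex.exp (m * (x - a)) - B * Complex.exp (-m * (x - a)) := by
    intro x hx
    rw [← c1 x hx, ← c2 x hx]
    linear_combination (-2 * m * g x) * ee x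
  have hA0 : A = 0 := by
    by_contra hA0
    have hA' : 0 < ‖A‖ := norm_pos_iff.2 hA0
    have hm' : 0 < ‖m‖ := norm_pos_iff.2 hm0
    -- with a growing part present, `‖g‖` exceeds `D + 1` eventually
    have t : Tendsto (fun x : ℝ => ‖A‖ * Real.exp (m.re * (x - a))) atTop atTop := by
      apply Tendsto.const_mul_atTop hA'
      apply Real.tendsto_exp_atTop.comp
      apply Tendsto.const_mul_atTop hm
      exact tendsto_atTop_add_const_right _ _ tendsto_id
    obtain ⟨X, hX⟩ := (tendsto_atTop.1 t (2 * ‖m‖ * (D + 1) + ‖B‖)).exists_forall_of_atTop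
    set Y := max X a
    have hlow : ∀ x ∈ Ioi Y, 1 ≤ N x := by
      intro x hx
      have hxX : X ≤ x := (le_max_left _ _).trans (le_of_lt hx)
      have hxa : a < x := lt_of_le_of_lt (le_max_right _ _) hx
      have h1 := hX x hxX
      have h2 := congrArg norm (sol x hxa.le)
      have h3 := norm_sub_norm_le (A * Complex.exp (m * (x - a))) (B * Complex.exp (-m * (x - a)))
      rw [← h2] at h3
      simp only [norm_mul, Complex.norm_exp, Complex.norm_ofNat] at h3
      have r1 : (m * (x - a)).re = m.re * (x - a) := by simp
      have r2 : (-m * (x - a)).re = -(m.re * (x - a)) := by simp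
      rw [r1, r2] at h3
      have h4 : Real.exp (-(m.re * (x - a))) ≤ 1 := by
        apply Real.exp_le_one_iff.2
        nlinarith
      have h5 : ‖B‖ * Real.exp (-(m.re * (x - a))) ≤ ‖B‖ :=
        mul_le_of_le_one_right (norm_nonneg _) h4
      have h6 := hgN x hxa
      have h7 : 2 * ‖m‖ * (D + 1) ≤ 2 * ‖m‖ * ‖g x‖ := by linarith
      have h8 : D + 1 ≤ ‖g x‖ := le_of_mul_le_mul_left h7 (by positivity)
      linarith
    have hNY : IntegrableOn N (Ioi Y) := hN.mono_set (Ioi_subset_Ioi (le_max_right _ _))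
    have hone : IntegrableOn (fun _ : ℝ => (1 : ℝ)) (Ioi Y) := by
      refine Integrable.mono' hNY aestronglyMeasurable_const ?_
      refine (ae_restrict_iff' measurableSet_Ioi).2 (Eventually.of_forall fun x hx => ?_)
      simpa using hlow x hx
    rw [integrableOn_const_iff] at hone
    simp at hone
  intro x hx
  have h1 := sol x hx
  have h2 := sol a le_rfl
  rw [hA0] at h1 h2
  simp only [sub_self, mul_zero, Complex.exp_zero, zero_mul, mul_one, zero_sub] at h1 h2
  have h3 : (2 * m) * g x = (2 * m) * (g a * Complex.exp (-m * (x - a))) := by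
    rw [h1]; linear_combination (-Complex.exp (-m * (x - a))) * h2
  exact mul_left_cancel₀ (by simpa using hm0) h3

/-! ### The modal equation on contracted cross sections -/

/-- Differentiation under the integral sign over a compact interval, for continuous data. -/
lemma hasDerivAt_param {G G' : ℝ → ℝ → ℂ} {l r : ℝ} (hG : Continuous (Function.uncurry G))
    (hG' : Continuous (Function.uncurry G'))
    (hd : ∀ x s, HasDerivAt (fun t => G t s) (G' x s) x) (x : ℝ) :
    HasDerivAt (fun x => ∫ s in l..r, G x s) (∫ s in l..r, G' x s) x := by
  have hGx : ∀ x, Continuous (G x) := fun x => hG.comp (by fun_prop : Continuous fun s => (x, s))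
  have hGx' : ∀ x, Continuous (G' x) := fun x => hG'.comp (by fun_prop : Continuous fun s => (x, s))
  obtain ⟨C, hC⟩ := (((isCompact_Icc (a := x - 1) (b := x + 1)).prod
    (isCompact_uIcc (a := l) (b := r))).exists_bound_of_continuousOn hG'.continuousOn)
  refine (intervalIntegral.hasDerivAt_integral_of_dominated_loc_of_deriv_le
    (bound := fun _ => C) (Icc_mem_nhds (by linarith : x - 1 < x) (by linarith : x < x + 1))
    (Eventually.of_forall fun y => (hGx y).aestronglyMeasurable)
    ((hGx x).intervalIntegrable _ _) (hGx' x).aestronglyMeasurable ?_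
    (continuous_const.intervalIntegrable _ _) ?_).2
  · refine Eventually.of_forall fun t ht y hy => ?_
    exact hC (y, t) ⟨hy, uIoc_subset_uIcc ht⟩
  · exact Eventually.of_forall fun t _ y _ => hd y t

/-- The open upper channel `{0 < x₂ < π}`. -/
def upper : Set (ℝ × ℝ) := {p | 0 < p.2 ∧ p.2 < Real.pi}

lemma isOpen_upper : IsOpen upper :=
  (isOpen_lt continuous_const continuous_snd).inter (isOpen_lt continuous_snd continuous_const)

/-- Contraction of `[0, π]` by the factor `c` about its midpoint, made constant outside `[0, π]`;
for `0 < c < 1` its values stay in a compact subset of `(0, π)`. -/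
def squeeze (c s : ℝ) : ℝ := Real.pi / 2 + c * (max 0 (min s Real.pi) - Real.pi / 2)

lemma clamp_mem (s : ℝ) : max 0 (min s Real.pi) ∈ Icc 0 Real.pi :=
  ⟨le_max_left _ _, max_le Real.pi_pos.le (min_le_right _ _)⟩

lemma clamp_eq {s : ℝ} (hs : s ∈ Icc 0 Real.pi) : max 0 (min s Real.pi) = s := by
  rw [min_eq_left hs.2, max_eq_right hs.1]

lemma continuous_squeeze (c : ℝ) : Continuous (squeeze c) := by
  unfold squeeze
  fun_prop

lemma squeeze_mem {c : ℝ} (h0 : 0 < c) (h1 : c < 1) (s : ℝ) :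
    0 < squeeze c s ∧ squeeze c s < Real.pi := by
  have := clamp_mem s
  have pp := Real.pi_pos
  unfold squeeze
  set t := max 0 (min s Real.pi)
  constructor <;> nlinarith [this.1, this.2]

/-- The `k`-th sine coefficient of a channel solution, computed on the contracted cross section,
satisfies the modal equation up to boundary terms that only involve values of `u`, not of
its normal derivative. -/
lemma contracted_mode {u u1 u11 u2 u22 : ℝ × ℝ → ℂ} {lam : ℂ} (hu : ContinuousOn u upper)
    (hu1 : ContinuousOn u1 upper) (hu11 : ContinuousOn u11 upper) (hu2 : ContinuousOn u2 upper)
    (hu22 : ContinuousOn u22 upper)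
    (d1 : ∀ p ∈ upper, HasDerivAt (fun t => u (t, p.2)) (u1 p) p.1)
    (d11 : ∀ p ∈ upper, HasDerivAt (fun t => u1 (t, p.2)) (u11 p) p.1)
    (d2 : ∀ p ∈ upper, HasDerivAt (fun t => u (p.1, t)) (u2 p) p.2)
    (d22 : ∀ p ∈ upper, HasDerivAt (fun t => u2 (p.1, t)) (u22 p) p.2)
    (heq : ∀ p ∈ upper, u11 p + u22 p + lam * u p = 0)
    {c : ℝ} (hc0 : 0 < c) (hc1 : c < 1) (k : ℕ) :
    ∃ F1 : ℝ → ℂ,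
      (∀ x, HasDerivAt (fun x => ∫ s in (0:ℝ)..Real.pi, u (x, squeeze c s) *
        Complex.sin ((k : ℂ) * s)) (F1 x) x) ∧
      (∀ x, HasDerivAt F1 (((k : ℂ) ^ 2 / (c : ℂ) ^ 2 - lam) *
          (∫ s in (0:ℝ)..Real.pi, u (x, squeeze c s) * Complex.sin ((k : ℂ) * s)) +
        (k : ℂ) / (c : ℂ) ^ 2 * (u (x, squeeze c Real.pi) * Complex.cos ((k : ℂ) * Real.pi) -
          u (x, squeeze c 0))) x) := by
  have pp := Real.pi_pos
  have hcc : (c : ℂ) ≠ 0 := by exact_mod_cast hc0.ne'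
  have mem : ∀ x s, (x, squeeze c s) ∈ upper := fun x s => squeeze_mem hc0 hc1 s
  have cont : ∀ {v : ℝ × ℝ → ℂ}, ContinuousOn v upper →
      Continuous fun p : ℝ × ℝ => v (p.1, squeeze c p.2) := fun hv =>
    hv.comp_continuous (continuous_fst.prodMk ((continuous_squeeze c).comp continuous_snd))
      fun p => mem _ _
  have cs : Continuous fun p : ℝ × ℝ => Complex.sin ((k : ℂ) * (p.2 : ℂ)) := by fun_prop
  have step : ∀ {v v' : ℝ × ℝ → ℂ}, ContinuousOn v upper → ContinuousOn v' upper →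
      (∀ p ∈ upper, HasDerivAt (fun t => v (t, p.2)) (v' p) p.1) → ∀ x,
      HasDerivAt (fun x => ∫ s in (0:ℝ)..Real.pi, v (x, squeeze c s) * Complex.sin ((k : ℂ) * s))
        (∫ s in (0:ℝ)..Real.pi, v' (x, squeeze c s) * Complex.sin ((k : ℂ) * s)) x := by
    intro v v' hv hv' hd x
    exact hasDerivAt_param (G := fun x s => v (x, squeeze c s) * Complex.sin ((k : ℂ) * s))
      (G' := fun x s => v' (x, squeeze c s) * Complex.sin ((k : ℂ) * s))
      ((cont hv).mul cs) ((cont hv').mul cs)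
      (fun x s => (hd (x, squeeze c s) (mem x s)).mul_const _) x
  refine ⟨fun x => ∫ s in (0:ℝ)..Real.pi, u1 (x, squeeze c s) * Complex.sin ((k : ℂ) * s),
    step hu hu1 d1, fun x => (step hu1 hu11 d11 x).congr_deriv ?_⟩
  have cont' : ∀ {v : ℝ × ℝ → ℂ}, ContinuousOn v upper →
      Continuous fun s : ℝ => v (x, squeeze c s) := fun hv =>
    (cont hv).comp (by fun_prop : Continuous fun s : ℝ => (x, s))
  have cs' : Continuous fun s : ℝ => Complex.sin ((k : ℂ) * s) := by fun_prop
  have ik : ∀ {v : ℝ × ℝ → ℂ}, ContinuousOn v upper → IntervalIntegrable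
      (fun s : ℝ => v (x, squeeze c s) * Complex.sin ((k : ℂ) * s)) volume 0 Real.pi :=
    fun hv => ((cont' hv).mul cs').intervalIntegrable _ _
  -- two integrations by parts, in the form of a primitive that is free of `u2` at the end points
  have ibp : ∫ s in (0:ℝ)..Real.pi, ((c : ℂ) ^ 2 * (u22 (x, squeeze c s) *
        Complex.sin ((k : ℂ) * s)) +
        (k : ℂ) ^ 2 * (u (x, squeeze c s) * Complex.sin ((k : ℂ) * s))) =
      -(k : ℂ) * (u (x, squeeze c Real.pi) * Complex.cos ((k : ℂ) * Real.pi) -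
        u (x, squeeze c 0)) := by
    set W : ℝ → ℂ := fun s => (c : ℂ) * u2 (x, squeeze c s) * Complex.sin ((k : ℂ) * s) -
      (k : ℂ) * (u (x, squeeze c s) * Complex.cos ((k : ℂ) * s)) with hW
    have hWc : Continuous W := by
      have h1 := cont' hu
      have h2 := cont' hu2
      exact ((continuous_const.mul h2).mul cs').sub
        (continuous_const.mul (h1.mul (by fun_prop)))
    rw [intervalIntegral.integral_eq_sub_of_hasDerivAt_of_le (f := W) pp.le hWc.continuousOn ?_
      (((ik hu22).const_mul _).add ((ik hu).const_mul _))]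
    · have e : Complex.sin ((k : ℂ) * Real.pi) = 0 := Complex.sin_nat_mul_pi k
      simp only [hW, e]
      simp
      ring
    · intro s hs
      have sq : HasDerivAt (squeeze c) c s := by
        have e1 : HasDerivAt (fun s : ℝ => Real.pi / 2 + c * (s - Real.pi / 2)) c s := by
          simpa using (((hasDerivAt_id s).sub_const (Real.pi / 2)).const_mul c).const_add
            (Real.pi / 2)
        refine e1.congr_of_eventuallyEq ?_
        filter_upwards [Ioo_mem_nhds hs.1 hs.2] with t ht
        rw [squeeze, clamp_eq ⟨ht.1.le, ht.2.le⟩]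
      have a1 : HasDerivAt (fun s : ℝ => u (x, squeeze c s)) (c * u2 (x, squeeze c s)) s := by
        exact ((d2 _ (mem x s)).scomp s sq).congr_deriv (Complex.real_smul ..)
      have a2 : HasDerivAt (fun s : ℝ => u2 (x, squeeze c s)) (c * u22 (x, squeeze c s)) s := by
        exact ((d22 _ (mem x s)).scomp s sq).congr_deriv (Complex.real_smul ..)
      have e0 : HasDerivAt (fun s : ℝ => (k : ℂ) * (s : ℂ)) k s := by
        simpa using (Complex.ofRealCLM.hasDerivAt (x := s)).const_mul (k : ℂ)
      have b1 := (Complex.hasDerivAt_sin ((k : ℂ) * s)).comp s e0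
      have b2 := (Complex.hasDerivAt_cos ((k : ℂ) * s)).comp s e0
      refine (((a2.const_mul (c : ℂ)).mul b1).sub ((a1.mul b2).const_mul (k : ℂ))).congr_deriv ?_
      simp only [Function.comp_apply]
      ring
  rw [intervalIntegral.integral_add ((ik hu22).const_mul _) ((ik hu).const_mul _),
    intervalIntegral.integral_const_mul, intervalIntegral.integral_const_mul] at ibp
  have e11 : ∫ s in (0:ℝ)..Real.pi, u11 (x, squeeze c s) * Complex.sin ((k : ℂ) * s) =
      -(∫ s in (0:ℝ)..Real.pi, u22 (x, squeeze c s) * Complex.sin ((k : ℂ) * s)) -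
      lam * ∫ s in (0:ℝ)..Real.pi, u (x, squeeze c s) * Complex.sin ((k : ℂ) * s) := by
    rw [← intervalIntegral.integral_const_mul, ← intervalIntegral.integral_neg,
      ← intervalIntegral.integral_sub
        (f := fun s : ℝ => -(u22 (x, squeeze c s) * Complex.sin ((k : ℂ) * s))) (ik hu22).neg
        ((ik hu).const_mul _)]
    apply intervalIntegral.integral_congr
    intro s _
    linear_combination Complex.sin ((k : ℂ) * s) * heq _ (mem x s)
  rw [e11]
  field_simp
  linear_combination -ibp

/-! ### Sine series -/

lemma integral_symm_split {G : ℝ → ℂ} (hG : ContinuousOn G (Icc (-Real.pi) Real.pi)) :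
    ∫ y in (-Real.pi)..Real.pi, G y = ∫ y in (0:ℝ)..Real.pi, (G y + G (-y)) := by
  have hpi := Real.pi_pos
  have i1 : IntervalIntegrable G volume (-Real.pi) 0 :=
    (hG.mono (Icc_subset_Icc le_rfl hpi.le)).intervalIntegrable_of_Icc (by linarith)
  have i2 : IntervalIntegrable G volume 0 Real.pi :=
    (hG.mono (Icc_subset_Icc (by linarith) le_rfl)).intervalIntegrable_of_Icc hpi.le
  have i3 : IntervalIntegrable (fun y => G (-y)) volume 0 Real.pi := by
    refine (hG.comp (by fun_prop) fun y hy => ?_).intervalIntegrable_of_Icc hpi.le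
    exact ⟨by linarith [hy.2], by linarith [hy.1]⟩
  rw [← intervalIntegral.integral_add_adjacent_intervals i1 i2,
    intervalIntegral.integral_add i2 i3, intervalIntegral.integral_comp_neg, add_comm]
  simp

/-- A continuous function on `[0, π]` that vanishes at both ends and has summable sine coefficients
is the sum of its sine series. This is the convergence of the Fourier series of the odd extension
`y ↦ φ (max y 0) - φ (max (-y) 0)` to the circle of length `2π`. -/
lemma hasSum_sine {φ : ℝ → ℂ} (hφ : ContinuousOn φ (Icc 0 Real.pi)) (h0 : φ 0 = 0)
    (hpi : φ Real.pi = 0) {s : ℕ → ℂ}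
    (hs : ∀ k : ℕ, s k = ∫ y in (0:ℝ)..Real.pi, φ y * Complex.sin ((k : ℂ) * y))
    (hsum : Summable s) {y : ℝ} (hy : y ∈ Icc 0 Real.pi) :
    HasSum (fun k : ℕ => (2 / Real.pi : ℂ) * s k * Complex.sin ((k : ℂ) * y)) (φ y) := by
  have pp := Real.pi_pos
  have pc : (Real.pi : ℂ) ≠ 0 := by exact_mod_cast pp.ne'
  have : Fact (0 < 2 * Real.pi) := ⟨by positivity⟩
  set E : ℝ → ℂ := fun y => φ (max y 0) - φ (max (-y) 0) with hE
  have Eper : -Real.pi + 2 * Real.pi = Real.pi := by ring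
  have Econt : ContinuousOn E (Icc (-Real.pi) Real.pi) := by
    refine (hφ.comp (by fun_prop) ?_).sub (hφ.comp (by fun_prop) ?_)
    · intro y hy
      exact ⟨le_max_right _ _, max_le hy.2 pp.le⟩
    · intro y hy
      exact ⟨le_max_right _ _, max_le (by linarith [hy.1]) pp.le⟩
  have Epos : ∀ y, 0 ≤ y → E y = φ y := by
    intro y hy
    simp [hE, max_eq_left hy, max_eq_right (neg_nonpos.2 hy), h0]
  have Eneg : ∀ y, 0 ≤ y → E (-y) = - φ y := by
    intro y hy
    simp [hE, max_eq_left hy, max_eq_right (neg_nonpos.2 hy), h0]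
  have Econt' : ContinuousOn E (Icc (-Real.pi) (-Real.pi + 2 * Real.pi)) := by rwa [Eper]
  have Eends : E (-Real.pi) = E (-Real.pi + 2 * Real.pi) := by
    rw [Eper, Eneg _ pp.le, Epos _ pp.le, hpi, neg_zero]
  let Φ : C(AddCircle (2 * Real.pi), ℂ) :=
    ⟨AddCircle.liftIco (2 * Real.pi) (-Real.pi) E, AddCircle.liftIco_continuous Eends Econt'⟩
  have four : ∀ (n : ℤ) (y : ℝ), fourier (T := 2 * Real.pi) n (y : AddCircle (2 * Real.pi)) =
      Complex.exp ((n * y : ℂ) * Complex.I) := by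
    intro n y
    rw [fourier_coe_apply]
    congr 1
    push_cast
    field_simp
  have coef : ∀ n : ℤ, fourierCoeff Φ n =
      (-Complex.I / Real.pi) * ∫ y in (0:ℝ)..Real.pi, φ y * Complex.sin ((n : ℂ) * y) := by
    intro n
    change fourierCoeff (AddCircle.liftIco (2 * Real.pi) (-Real.pi) E) n = _
    rw [fourierCoeff_liftIco_eq, fourierCoeffOn_eq_integral]
    have e1 : ∀ y : ℝ, fourier (T := -Real.pi + 2 * Real.pi - -Real.pi) (-n) y • E y =
        Complex.exp ((-n * y : ℂ) * Complex.I) * E y := by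
      intro y
      rw [fourier_coe_apply, smul_eq_mul]
      congr 2
      push_cast
      field_simp
      ring
    simp_rw [e1]
    rw [Eper, integral_symm_split (G := fun y => Complex.exp ((-n * y : ℂ) * Complex.I) * E y)
      (ContinuousOn.mul (by fun_prop) Econt)]
    rw [show (1 / (Real.pi - -Real.pi) : ℝ) = 1 / (2 * Real.pi) by ring, Complex.real_smul,
      ← intervalIntegral.integral_const_mul, ← intervalIntegral.integral_const_mul]
    apply intervalIntegral.integral_congr
    intro y hy
    rw [uIcc_of_le pp.le] at hy
    simp only [Complex.sin]
    rw [Epos y hy.1, Eneg y hy.1]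
    push_cast
    rw [show (-(n:ℂ) * -y * Complex.I) = n * y * Complex.I by ring,
      show (-(n:ℂ) * y * Complex.I) = -(n * y) * Complex.I by ring]
    field_simp
    linear_combination (Complex.exp (-(n * y * Complex.I)) - Complex.exp (n * y * Complex.I)) *
      φ y * Complex.I_sq
  have coefN : ∀ k : ℕ, fourierCoeff Φ (k : ℤ) = (-Complex.I / Real.pi) * s k := by
    intro k
    rw [coef, hs]
    simp
  have coefN' : ∀ k : ℕ, fourierCoeff Φ (-(k : ℤ)) = -((-Complex.I / Real.pi) * s k) := by
    intro k
    rw [coef, hs, ← mul_neg, ← intervalIntegral.integral_neg]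
    congr 2
    ext y
    push_cast
    rw [neg_mul, Complex.sin_neg]
    ring
  have sm : Summable (fourierCoeff Φ) := by
    apply Summable.of_nat_of_neg
    · simp_rw [coefN]
      exact hsum.mul_left _
    · simp_rw [coefN']
      exact (hsum.mul_left _).neg
  have hF := (has_pointwise_sum_fourier_series_of_summable sm
    (y : AddCircle (2 * Real.pi))).nat_add_neg
  have s0 : s 0 = 0 := by rw [hs]; simp
  have c0 : fourierCoeff Φ 0 = 0 := by
    have := coefN 0
    rw [s0] at this
    simpa using this
  have val : Φ (y : AddCircle (2 * Real.pi)) = φ y := by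
    rcases eq_or_lt_of_le hy.2 with h | h
    · have : ((y : ℝ) : AddCircle (2 * Real.pi)) = ((-Real.pi : ℝ) : AddCircle (2 * Real.pi)) := by
        rw [h, ← AddCircle.coe_add_period (2 * Real.pi) (-Real.pi), Eper]
      rw [this]
      change AddCircle.liftIco (2 * Real.pi) (-Real.pi) E _ = _
      rw [AddCircle.liftIco_coe_apply ⟨le_rfl, by linarith⟩, Eneg _ pp.le, h, hpi, neg_zero]
    · change AddCircle.liftIco (2 * Real.pi) (-Real.pi) E _ = _
      rw [AddCircle.liftIco_coe_apply ⟨by linarith [hy.1], by linarith⟩, Epos _ hy.1]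
  rw [val, c0, zero_smul, add_zero] at hF
  refine hF.congr_fun ?_
  intro k
  rw [coefN, coefN', four, four, Complex.sin]
  simp only [smul_eq_mul]
  push_cast
  rw [show (-(k:ℂ) * y * Complex.I) = -(k * y * Complex.I) by ring,
    show (-((k:ℂ) * y) * Complex.I) = -(k * y * Complex.I) by ring]
  ring

/-! ### Decay of the sine coefficients -/

lemma norm_sin_nat_mul_le (k : ℕ) (s : ℝ) : ‖Complex.sin ((k : ℂ) * s)‖ ≤ 1 := by
  have : Complex.sin ((k : ℂ) * s) = ((Real.sin (k * s) : ℝ) : ℂ) := by push_cast; rfl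
  rw [this, Complex.norm_real]
  exact Real.abs_sin_le_one _

lemma norm_cos_nat_mul_le (k : ℕ) (s : ℝ) : ‖Complex.cos ((k : ℂ) * s)‖ ≤ 1 := by
  have : Complex.cos ((k : ℂ) * s) = ((Real.cos (k * s) : ℝ) : ℂ) := by push_cast; rfl
  rw [this, Complex.norm_real]
  exact Real.abs_cos_le_one _

/-- The sine coefficients of a square-integrable channel solution with Dirichlet conditions on
`x₁ ≥ a` are multiples of `e^{-√(k² - λ) (x₁ - a)}`. Since `u` is only continuous up to the walls, the modal
equation is obtained for the contracted cross sections and passed to the limit `c → 1`. -/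
lemma mode_decay {u u1 u11 u2 u22 : ℝ × ℝ → ℂ} {lam : ℂ} {a : ℝ}
    (hlam : ∀ t : ℝ, 1 ≤ t → lam ≠ (t : ℂ)) (hu : ContinuousOn u upper)
    (hu1 : ContinuousOn u1 upper) (hu11 : ContinuousOn u11 upper) (hu2 : ContinuousOn u2 upper)
    (hu22 : ContinuousOn u22 upper)
    (d1 : ∀ p ∈ upper, HasDerivAt (fun t => u (t, p.2)) (u1 p) p.1)
    (d11 : ∀ p ∈ upper, HasDerivAt (fun t => u1 (t, p.2)) (u11 p) p.1)
    (d2 : ∀ p ∈ upper, HasDerivAt (fun t => u (p.1, t)) (u2 p) p.2)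
    (d22 : ∀ p ∈ upper, HasDerivAt (fun t => u2 (p.1, t)) (u22 p) p.2)
    (heq : ∀ p ∈ upper, u11 p + u22 p + lam * u p = 0)
    (hcl : ContinuousOn u {p : ℝ × ℝ | p.2 ∈ Icc 0 Real.pi})
    (hb0 : ∀ x, a ≤ x → u (x, 0) = 0) (hbpi : ∀ x, a ≤ x → u (x, Real.pi) = 0)
    (hL2 : IntegrableOn (fun p => ‖u p‖ ^ 2) upper) {k : ℕ} (hk : 1 ≤ k) {x : ℝ} (hx : a ≤ x) :
    ∫ s in (0:ℝ)..Real.pi, u (x, s) * Complex.sin ((k : ℂ) * s) =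
      (∫ s in (0:ℝ)..Real.pi, u (a, s) * Complex.sin ((k : ℂ) * s)) *
        Complex.exp (-mu lam k * (x - a)) := by
  have pp := Real.pi_pos
  -- clamping to `[0, π]` makes `u` continuous on the whole plane
  set q : ℝ → ℝ := fun s => max 0 (min s Real.pi) with hq
  have qc : Continuous q := by rw [hq]; fun_prop
  have uq : Continuous fun p : ℝ × ℝ => u (p.1, q p.2) :=
    hcl.comp_continuous (by fun_prop) fun p => clamp_mem p.2
  have cs : Continuous fun s : ℝ => Complex.sin ((k : ℂ) * s) := by fun_prop
  set f : ℝ → ℂ := fun x => ∫ s in (0:ℝ)..Real.pi, u (x, q s) * Complex.sin ((k : ℂ) * s) with hf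
  have f_eq : ∀ x, ∫ s in (0:ℝ)..Real.pi, u (x, s) * Complex.sin ((k : ℂ) * s) = f x := by
    intro x
    apply intervalIntegral.integral_congr
    intro s hs
    rw [uIcc_of_le pp.le] at hs
    simp only [hq, clamp_eq hs]
  have fc : Continuous f :=
    intervalIntegral.continuous_parametric_intervalIntegral_of_continuous'
      (f := fun x s => u (x, q s) * Complex.sin ((k : ℂ) * s))
      (uq.mul (cs.comp continuous_snd)) 0 Real.pi
  set c : ℕ → ℝ := fun n => 1 - 1 / ((n : ℝ) + 2) with hc
  have c_half : ∀ n, 1 / 2 ≤ c n := by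
    intro n
    have : 1 / ((n : ℝ) + 2) ≤ 1 / 2 :=
      one_div_le_one_div_of_le (by norm_num) (by linarith [(Nat.cast_nonneg n : (0:ℝ) ≤ n)])
    simp only [hc]; linarith
  have c_pos : ∀ n, 0 < c n := fun n => by linarith [c_half n]
  have c_lt : ∀ n, c n < 1 := by
    intro n
    have : 0 < 1 / ((n : ℝ) + 2) := by positivity
    simp only [hc]; linarith
  have c_lim : Tendsto c atTop (nhds 1) := by
    have h1 : Tendsto (fun n : ℕ => (n : ℝ) + 2) atTop atTop :=
      tendsto_atTop_add_const_right _ _ tendsto_natCast_atTop_atTop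
    have := (tendsto_const_nhds (x := (1:ℝ))).sub (h1.inv_tendsto_atTop)
    simpa [hc] using this
  have cC_lim : Tendsto (fun n => (c n : ℂ)) atTop (nhds 1) := by
    have := (Complex.continuous_ofReal.tendsto 1).comp c_lim
    simpa [Function.comp_def] using this
  have sq_lim : ∀ s, Tendsto (fun n => squeeze (c n) s) atTop (nhds (q s)) := by
    intro s
    have := ((c_lim.mul_const (q s - Real.pi / 2)).const_add (Real.pi / 2))
    simpa [squeeze] using this
  have sq_mem : ∀ n s, squeeze (c n) s ∈ Icc 0 Real.pi := fun n s =>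
    ⟨(squeeze_mem (c_pos n) (c_lt n) s).1.le, (squeeze_mem (c_pos n) (c_lt n) s).2.le⟩
  have u_lim : ∀ x s, Tendsto (fun n => u (x, squeeze (c n) s)) atTop (nhds (u (x, q s))) := by
    intro x s
    have h1 := hcl (x, q s) (clamp_mem s)
    refine h1.tendsto.comp (tendsto_nhdsWithin_iff.2 ⟨?_, ?_⟩)
    · exact tendsto_const_nhds.prodMk_nhds (sq_lim s)
    · exact Eventually.of_forall fun n => sq_mem n s
  have u_bd : ∀ X, ∃ M, 0 ≤ M ∧ ∀ x ∈ Icc a X, ∀ y ∈ Icc 0 Real.pi, ‖u (x, y)‖ ≤ M := by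
    intro X
    obtain ⟨M, hM⟩ := ((isCompact_Icc (a := a) (b := X)).prod
      (isCompact_Icc (a := 0) (b := Real.pi))).exists_bound_of_continuousOn
      (hcl.mono fun p hp => hp.2)
    exact ⟨max M 0, le_max_right _ _, fun x hx y hy => (hM (x, y) ⟨hx, hy⟩).trans (le_max_left _ _)⟩
  have uS_cont : ∀ n, Continuous fun p : ℝ × ℝ => u (p.1, squeeze (c n) p.2) := fun n =>
    hu.comp_continuous (continuous_fst.prodMk ((continuous_squeeze (c n)).comp continuous_snd))
      fun p => squeeze_mem (c_pos n) (c_lt n) p.2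
  choose F1 hF hF1 using fun n =>
    contracted_mode hu hu1 hu11 hu2 hu22 d1 d11 d2 d22 heq (c_pos n) (c_lt n) k
  set F : ℕ → ℝ → ℂ := fun n x => ∫ s in (0:ℝ)..Real.pi, u (x, squeeze (c n) s) *
    Complex.sin ((k : ℂ) * s) with hFdef
  have F_cont : ∀ n, Continuous (F n) :=
    fun n => continuous_iff_continuousAt.2 fun x => (hF n x).continuousAt
  have F_lim : ∀ x, a ≤ x → Tendsto (fun n => F n x) atTop (nhds (f x)) := by
    intro x hx
    obtain ⟨M, hM0, hM⟩ := u_bd x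
    apply intervalIntegral.tendsto_integral_filter_of_dominated_convergence (fun _ => M)
    · refine Eventually.of_forall fun n => Continuous.aestronglyMeasurable ?_
      exact ((uS_cont n).comp (by fun_prop : Continuous fun s : ℝ => (x, s))).mul cs
    · refine Eventually.of_forall fun n => Eventually.of_forall fun s _ => ?_
      rw [norm_mul]
      exact (mul_le_of_le_one_right (norm_nonneg _) (norm_sin_nat_mul_le k s)).trans
        (hM x ⟨hx, le_rfl⟩ _ (sq_mem n s))
    · exact continuous_const.intervalIntegrable _ _
    · exact Eventually.of_forall fun s _ => (u_lim x s).mul_const _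
  -- the second derivatives of `F n`; their boundary terms vanish in the limit
  set F2 : ℕ → ℝ → ℂ := fun n x => ((k : ℂ) ^ 2 / (c n : ℂ) ^ 2 - lam) * F n x +
        (k : ℂ) / (c n : ℂ) ^ 2 * (u (x, squeeze (c n) Real.pi) * Complex.cos ((k : ℂ) * Real.pi) -
          u (x, squeeze (c n) 0)) with hF2
  have F2_cont : ∀ n, Continuous (F2 n) := by
    intro n
    have h1 : ∀ s, Continuous fun x : ℝ => u (x, squeeze (c n) s) := fun s =>
      (uS_cont n).comp (by fun_prop : Continuous fun x : ℝ => (x, s))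
    exact (continuous_const.mul (F_cont n)).add
      (continuous_const.mul (((h1 _).mul continuous_const).sub (h1 _)))
  have q0 : q 0 = 0 := clamp_eq ⟨le_rfl, pp.le⟩
  have qpi : q Real.pi = Real.pi := clamp_eq ⟨pp.le, le_rfl⟩
  have F2_lim : ∀ x, a ≤ x → Tendsto (fun n => F2 n x) atTop (nhds (mu lam k ^ 2 * f x)) := by
    intro x hx
    have l0 := u_lim x 0
    have lpi := u_lim x Real.pi
    rw [q0, hb0 x hx] at l0
    rw [qpi, hbpi x hx] at lpi
    have h1 : Tendsto (fun n => (k : ℂ) ^ 2 / (c n : ℂ) ^ 2) atTop (nhds ((k : ℂ) ^ 2 / 1 ^ 2)) :=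
      tendsto_const_nhds.div (cC_lim.pow 2) (by norm_num)
    have h2 : Tendsto (fun n => (k : ℂ) / (c n : ℂ) ^ 2) atTop (nhds ((k : ℂ) / 1 ^ 2)) :=
      tendsto_const_nhds.div (cC_lim.pow 2) (by norm_num)
    have := ((h1.sub_const lam).mul (F_lim x hx)).add
      (h2.mul ((lpi.mul_const (Complex.cos ((k : ℂ) * Real.pi))).sub l0))
    simpa [mu_sq] using this
  have F2_bd : ∀ X, ∃ C, ∀ n, ∀ x ∈ Icc a X, ‖F2 n x‖ ≤ C := by
    intro X
    obtain ⟨M, hM0, hM⟩ := u_bd X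
    refine ⟨((k : ℝ) ^ 2 * 4 + ‖lam‖) * (M * Real.pi) + (k : ℝ) * 4 * (M * 1 + M), fun n x hx => ?_⟩
    have hcn : 1 / ‖(c n : ℂ)‖ ^ 2 ≤ 4 := by
      rw [Complex.norm_real, Real.norm_eq_abs, sq_abs, div_le_iff₀ (by have := c_pos n; positivity)]
      nlinarith [c_half n]
    have b1 : ‖F n x‖ ≤ M * Real.pi := by
      refine (intervalIntegral.norm_integral_le_of_norm_le_const (C := M) fun s _ => ?_).trans ?_
      · rw [norm_mul]
        exact (mul_le_of_le_one_right (norm_nonneg _) (norm_sin_nat_mul_le k s)).trans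
          (hM x hx _ (sq_mem n s))
      · rw [sub_zero, abs_of_pos pp]
    have b2 : ‖(k : ℂ) ^ 2 / (c n : ℂ) ^ 2 - lam‖ ≤ (k : ℝ) ^ 2 * 4 + ‖lam‖ := by
      refine (norm_sub_le _ _).trans ?_
      rw [norm_div, norm_pow, norm_pow, Complex.norm_natCast, div_eq_mul_one_div]
      gcongr
    have b3 : ‖(k : ℂ) / (c n : ℂ) ^ 2‖ ≤ (k : ℝ) * 4 := by
      rw [norm_div, norm_pow, Complex.norm_natCast, div_eq_mul_one_div]
      gcongr
    have b4 : ‖u (x, squeeze (c n) Real.pi) * Complex.cos ((k : ℂ) * Real.pi) -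
          u (x, squeeze (c n) 0)‖ ≤ M * 1 + M := by
      refine (norm_sub_le _ _).trans ?_
      rw [norm_mul]
      gcongr
      · exact hM x hx _ (sq_mem n _)
      · exact norm_cos_nat_mul_le k _
      · exact hM x hx _ (sq_mem n _)
    refine (norm_add_le _ _).trans ?_
    rw [norm_mul, norm_mul]
    gcongr
  obtain ⟨g, g1, hg, hg1, hgf⟩ := limit_second_deriv (a := a) hF hF1 F2_cont
    (continuous_const.mul fc) F_lim F2_lim F2_bd
  -- square integrability enters through `‖u‖ ≤ 1 + ‖u‖²`
  set N : ℝ → ℝ := fun x => ∫ y in Ioo 0 Real.pi, ‖u (x, y)‖ ^ 2 with hN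
  have hset : Ioi a ×ˢ Ioo 0 Real.pi ⊆ upper := fun p hp => hp.2
  have hprod : Integrable (fun p : ℝ × ℝ => ‖u p‖ ^ 2)
      ((volume.restrict (Ioi a)).prod (volume.restrict (Ioo 0 Real.pi))) := by
    rw [Measure.prod_restrict]
    exact hL2.mono_set hset
  have hNint : IntegrableOn N (Ioi a) := hprod.integral_prod_left
  have hgN : ∀ x, a < x → ‖g x‖ ≤ Real.pi + N x := by
    intro x hx
    rw [hgf x hx.le, hN]
    simp only
    have cu : Continuous fun s : ℝ => u (x, q s) :=
      uq.comp (by fun_prop : Continuous fun s : ℝ => (x, s))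
    have cu2 : Continuous fun s : ℝ => ‖u (x, q s)‖ ^ 2 := cu.norm.pow 2
    have e1 : ∫ y in Ioo 0 Real.pi, ‖u (x, y)‖ ^ 2 =
        ∫ s in (0:ℝ)..Real.pi, ‖u (x, q s)‖ ^ 2 := by
      rw [← integral_Ioc_eq_integral_Ioo, ← intervalIntegral.integral_of_le pp.le]
      apply intervalIntegral.integral_congr
      intro s hs
      rw [uIcc_of_le pp.le] at hs
      simp only [hq, clamp_eq hs]
    have e2 : Real.pi + ∫ s in (0:ℝ)..Real.pi, ‖u (x, q s)‖ ^ 2 =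
        ∫ s in (0:ℝ)..Real.pi, (1 + ‖u (x, q s)‖ ^ 2) := by
      rw [intervalIntegral.integral_add (continuous_const.intervalIntegrable _ _)
        (cu2.intervalIntegrable _ _)]
      simp
    rw [e1, e2]
    refine intervalIntegral.norm_integral_le_of_norm_le pp.le
      (Eventually.of_forall fun s _ => ?_)
      ((continuous_const.add cu2).intervalIntegrable _ _)
    rw [norm_mul]
    refine (mul_le_of_le_one_right (norm_nonneg _) (norm_sin_nat_mul_le k s)).trans ?_
    nlinarith [sq_nonneg (‖u (x, q s)‖ - 1), sq_nonneg ‖u (x, q s)‖]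
  have := decaying_solution (mu_re_pos hlam hk) hg
    (fun x hx => (hg1 x).congr_deriv (by simp only [Pi.mul_apply, hgf x hx])) hNint hgN x hx
  rw [f_eq, f_eq, ← hgf x hx, ← hgf a le_rfl, this]

/-! ### Estimates for the tail of the modal expansion -/

/-- The separated solution `A e^{-m (x₁ - a)} sin (n x₂)`, extended to the whole plane. -/
def mode (a : ℝ) (A m : ℂ) (n : ℕ) (p : ℝ × ℝ) : ℂ :=
  A * Complex.exp (-m * ((p.1 : ℂ) - a)) * Complex.sin ((n : ℂ) * p.2)

lemma norm_exp_mode (a x : ℝ) (m : ℂ) :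
    ‖Complex.exp (-m * ((x : ℂ) - a))‖ = Real.exp (-m.re * (x - a)) := by
  rw [Complex.norm_exp]
  simp

lemma norm_mode_le (a : ℝ) (A m : ℂ) (n : ℕ) (p : ℝ × ℝ) :
    ‖mode a A m n p‖ ≤ ‖A‖ * Real.exp (-m.re * (p.1 - a)) := by
  rw [mode, norm_mul, norm_mul, norm_exp_mode]
  exact mul_le_of_le_one_right (by positivity) (norm_sin_nat_mul_le n p.2)

lemma exists_fderiv_mode (a : ℝ) (A m : ℂ) (n : ℕ) (p : ℝ × ℝ) :
    ∃ L : ℝ × ℝ →L[ℝ] ℂ, HasFDerivAt (mode a A m n) L p ∧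
      ‖L‖ ≤ ‖A‖ * ((‖m‖ + n) * Real.exp (-m.re * (p.1 - a))) := by
  have h1 : HasFDerivAt (fun p : ℝ × ℝ => (p.1 : ℂ))
      (Complex.ofRealCLM.comp (ContinuousLinearMap.fst ℝ ℝ ℝ)) p :=
    (Complex.ofRealCLM.comp (ContinuousLinearMap.fst ℝ ℝ ℝ)).hasFDerivAt
  have h2 : HasFDerivAt (fun p : ℝ × ℝ => (p.2 : ℂ))
      (Complex.ofRealCLM.comp (ContinuousLinearMap.snd ℝ ℝ ℝ)) p :=
    (Complex.ofRealCLM.comp (ContinuousLinearMap.snd ℝ ℝ ℝ)).hasFDerivAt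
  have h3 := (((h1.sub_const (a : ℂ)).const_mul (-m)).cexp.const_mul A).mul
    ((Complex.hasDerivAt_sin ((n : ℂ) * p.2)).comp_hasFDerivAt p (h2.const_mul (n : ℂ)))
  refine ⟨_, h3, ?_⟩
  refine ContinuousLinearMap.opNorm_le_bound _ (by positivity) fun v => ?_
  have v1 : ‖v.1‖ ≤ ‖v‖ := norm_fst_le v
  have v2 : ‖v.2‖ ≤ ‖v‖ := norm_snd_le v
  have e : ∀ S C E : ℂ, ‖S‖ ≤ 1 → ‖C‖ ≤ 1 →
      ‖A * E * (C * (n * (v.2 : ℂ))) + S * (A * (E * (-m * (v.1 : ℂ))))‖ ≤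
      ‖A‖ * ((‖m‖ + n) * ‖E‖) * ‖v‖ := by
    intro S C E hS hC
    refine (norm_add_le _ _).trans ?_
    simp only [norm_mul, norm_neg, Complex.norm_natCast, Complex.norm_real]
    have i1 : ‖C‖ * (n * ‖v.2‖) ≤ 1 * (n * ‖v‖) := by gcongr
    have i2 : ‖S‖ * (‖m‖ * ‖v.1‖) ≤ 1 * (‖m‖ * ‖v‖) := by gcongr
    calc ‖A‖ * ‖E‖ * (‖C‖ * (n * ‖v.2‖)) + ‖S‖ * (‖A‖ * (‖E‖ * (‖m‖ * ‖v.1‖)))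
        = ‖A‖ * ‖E‖ * (‖C‖ * (n * ‖v.2‖)) + ‖A‖ * ‖E‖ * (‖S‖ * (‖m‖ * ‖v.1‖)) := by ring
      _ ≤ ‖A‖ * ‖E‖ * (1 * (n * ‖v‖)) + ‖A‖ * ‖E‖ * (1 * (‖m‖ * ‖v‖)) := by gcongr
      _ = _ := by ring
  rw [← norm_exp_mode]
  refine le_trans (le_of_eq ?_) (e (Complex.sin ((n : ℂ) * p.2)) (Complex.cos ((n : ℂ) * p.2))
    _ (norm_sin_nat_mul_le n p.2) (norm_cos_nat_mul_le n p.2))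
  congr 1

/-- A superposition, with bounded coefficients, of the modes of index at least two, together with
its gradient, is dominated by the decay of the second mode. -/
lemma tail_bounds {lam : ℂ} (hlam : ∀ t : ℝ, 1 ≤ t → lam ≠ (t : ℂ)) (a : ℝ) {A : ℕ → ℂ} {M : ℝ}
    (hA : ∀ k, ‖A k‖ ≤ M) :
    ∃ C, 0 < C ∧ ∀ p : ℝ × ℝ, a + 1 ≤ p.1 →
      ‖∑' k : ℕ, mode a (A k) (mu lam (k + 2)) (k + 2) p‖ ≤
        C * Real.exp (-(mu lam 2).re * p.1) ∧
      ∃ L : ℝ × ℝ →L[ℝ] ℂ, HasFDerivAt (fun p => ∑' k : ℕ, mode a (A k) (mu lam (k + 2)) (k + 2) p) L p ∧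
        ‖L‖ ≤ C * Real.exp (-(mu lam 2).re * p.1) := by
  have hM : 0 ≤ M := (norm_nonneg _).trans (hA 0)
  choose L hL hLn using fun (k : ℕ) (p : ℝ × ℝ) =>
    exists_fderiv_mode a (A k) (mu lam (k + 2)) (k + 2) p
  have s1 := summable_mu hlam one_pos 1
  have sh := (summable_mu hlam one_half_pos 1).mul_left M
  set w : ℕ → ℝ := fun k => (‖mu lam (k + 2)‖ + ((k + 2 : ℕ) : ℝ)) *
      Real.exp (-(mu lam (k + 2)).re * 1) with hw
  set W := ∑' k, w k with hW
  have hW0 : 0 ≤ W := tsum_nonneg fun k => by positivity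
  -- `e^{-Re μ_k (x - a)} ≤ e^{-Re μ_k} e^{-Re μ_2 (x - a - 1)}` for `x ≥ a + 1`
  have key : ∀ (k : ℕ) (p : ℝ × ℝ), a + 1 ≤ p.1 →
      ‖A k‖ * ((‖mu lam (k + 2)‖ + ((k + 2 : ℕ) : ℝ)) *
        Real.exp (-(mu lam (k + 2)).re * (p.1 - a))) ≤
      w k * (M * Real.exp ((mu lam 2).re * (a + 1)) * Real.exp (-(mu lam 2).re * p.1)) := by
    intro k p hp
    have hm := mu_re_mono hlam (j := 2) (k := k + 2) (by norm_num) (by omega)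
    have : Real.exp (-(mu lam (k + 2)).re * (p.1 - a)) ≤ Real.exp (-(mu lam (k + 2)).re * 1) *
        (Real.exp ((mu lam 2).re * (a + 1)) * Real.exp (-(mu lam 2).re * p.1)) := by
      rw [← Real.exp_add, ← Real.exp_add]
      apply Real.exp_le_exp.2
      nlinarith
    calc _ ≤ M * ((‖mu lam (k + 2)‖ + ((k + 2 : ℕ) : ℝ)) *
          (Real.exp (-(mu lam (k + 2)).re * 1) *
        (Real.exp ((mu lam 2).re * (a + 1)) * Real.exp (-(mu lam 2).re * p.1)))) := by
          gcongr
          exact hA k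
      _ = _ := by simp only [hw]; ring
  have one_le : ∀ k : ℕ, 1 ≤ ‖mu lam (k + 2)‖ + ((k + 2 : ℕ) : ℝ) := by
    intro k
    have := norm_nonneg (mu lam (k + 2))
    push_cast
    linarith [(Nat.cast_nonneg k : (0:ℝ) ≤ k)]
  have val : ∀ (k : ℕ) (p : ℝ × ℝ), ‖mode a (A k) (mu lam (k + 2)) (k + 2) p‖ ≤
      ‖A k‖ * ((‖mu lam (k + 2)‖ + ((k + 2 : ℕ) : ℝ)) *
        Real.exp (-(mu lam (k + 2)).re * (p.1 - a))) := by
    intro k p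
    refine (norm_mode_le _ _ _ _ _).trans ?_
    gcongr
    exact le_mul_of_one_le_left (Real.exp_pos _).le (one_le k)
  set K := M * Real.exp ((mu lam 2).re * (a + 1)) with hK
  have hK0 : 0 ≤ K := by positivity
  refine ⟨W * K + 1, by positivity, fun p hp => ?_⟩
  have hsum : HasSum (fun k => w k * (K * Real.exp (-(mu lam 2).re * p.1)))
      (W * (K * Real.exp (-(mu lam 2).re * p.1))) := s1.hasSum.mul_right _
  have fin : W * (K * Real.exp (-(mu lam 2).re * p.1)) ≤
      (W * K + 1) * Real.exp (-(mu lam 2).re * p.1) := by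
    have := Real.exp_pos (-(mu lam 2).re * p.1)
    nlinarith
  refine ⟨(tsum_of_norm_bounded hsum fun k => (val k p).trans (key k p hp)).trans fin,
    ∑' k, L k p, ?_,
    (tsum_of_norm_bounded hsum fun k => (hLn k p).trans (key k p hp)).trans fin⟩
  -- termwise differentiation on a half-plane at positive distance from `{x₁ = a}`
  have hS : IsOpen {p : ℝ × ℝ | a + 1 / 2 < p.1} := isOpen_lt continuous_const continuous_fst
  have hSc : IsPreconnected {p : ℝ × ℝ | a + 1 / 2 < p.1} := by
    have : {p : ℝ × ℝ | a + 1 / 2 < p.1} = Ioi (a + 1 / 2) ×ˢ univ := by ext; simp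
    rw [this]
    exact isPreconnected_Ioi.prod isPreconnected_univ
  have hpS : p ∈ {p : ℝ × ℝ | a + 1 / 2 < p.1} := by
    change a + 1 / 2 < p.1
    linarith
  refine hasFDerivAt_tsum_of_isPreconnected sh hS hSc (fun k q _ => hL k q) ?_ hpS
    (Summable.of_norm_bounded hsum.summable fun k => (val k p).trans (key k p hp)) hpS
  intro k q hq
  have hq' : a + 1 / 2 < q.1 := hq
  have hm := mu_re_pos hlam (k := k + 2) (by omega)
  refine (hLn k q).trans ?_
  gcongr ?_ * (_ * Real.exp ?_)
  · exact hA k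
  · nlinarith

/-! ### The modal expansion of the solution -/

lemma contDiffOn_fderiv_apply {v : ℝ × ℝ → ℂ} (hv : ContDiffOn ℝ (⊤ : ℕ∞) v upper) (w : ℝ × ℝ) :
    ContDiffOn ℝ (⊤ : ℕ∞) (fun q => fderiv ℝ v q w) upper :=
  (hv.fderiv_of_isOpen isOpen_upper (by simp)).clm_apply contDiffOn_const

lemma hasDerivAt_slices {v : ℝ × ℝ → ℂ} (hv : ContDiffOn ℝ (⊤ : ℕ∞) v upper) {p : ℝ × ℝ}
    (hp : p ∈ upper) :
    HasDerivAt (fun t => v (t, p.2)) (fderiv ℝ v p (1, 0)) p.1 ∧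
      HasDerivAt (fun t => v (p.1, t)) (fderiv ℝ v p (0, 1)) p.2 := by
  have h : HasFDerivAt v (fderiv ℝ v p) p :=
    ((hv.differentiableOn (by simp) p hp).differentiableAt
      (isOpen_upper.mem_nhds hp)).hasFDerivAt
  exact ⟨HasFDerivAt.comp_hasDerivAt (f := fun t => (t, p.2)) p.1 h
      ((hasDerivAt_id p.1).prodMk (hasDerivAt_const p.1 p.2)),
    HasFDerivAt.comp_hasDerivAt (f := fun t => (p.1, t)) p.2 h
      ((hasDerivAt_const p.2 p.1).prodMk (hasDerivAt_id p.2))⟩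

/-- Sine expansion of a channel function whose sine coefficients decay like `e^{-μ_k (x - a)}`,
with the first mode split off. -/
lemma sub_first_mode_eq_tsum {u : ℝ × ℝ → ℂ} {lam : ℂ} {a M : ℝ} {b : ℕ → ℂ}
    (hlam : ∀ t : ℝ, 1 ≤ t → lam ≠ (t : ℂ))
    (hcl : ContinuousOn u {p : ℝ × ℝ | p.2 ∈ Icc 0 Real.pi})
    (hb0 : ∀ x, a ≤ x → u (x, 0) = 0) (hbpi : ∀ x, a ≤ x → u (x, Real.pi) = 0)
    (hb : ∀ k, ‖b k‖ ≤ M)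
    (hmode : ∀ k : ℕ, 1 ≤ k → ∀ x, a ≤ x →
      ∫ s in (0:ℝ)..Real.pi, u (x, s) * Complex.sin ((k : ℂ) * s) =
        b k * Complex.exp (-mu lam k * (x - a)))
    {p : ℝ × ℝ} (hp1 : a < p.1) (hp2 : p.2 ∈ Icc 0 Real.pi) :
    u p - (2 / Real.pi : ℂ) * b 1 * Complex.exp (mu lam 1 * a) *
        Complex.exp (-mu lam 1 * (p.1 : ℂ)) * Complex.sin (p.2 : ℂ) =
      ∑' k : ℕ, mode a ((2 / Real.pi : ℂ) * b (k + 2)) (mu lam (k + 2)) (k + 2) p := by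
  obtain ⟨x, y⟩ := p
  simp only at hp1 hp2
  set s : ℕ → ℂ := fun k => ∫ t in (0:ℝ)..Real.pi, u (x, t) * Complex.sin ((k : ℂ) * t) with hs
  have hsk : ∀ k : ℕ, 1 ≤ k → s k = b k * Complex.exp (-mu lam k * (x - a)) := fun k hk =>
    hmode k hk x hp1.le
  have hsum : Summable s := by
    rw [← summable_nat_add_iff 1]
    refine Summable.of_norm_bounded
      ((summable_mu hlam (sub_pos.2 hp1) 0).mul_left M) fun k => ?_
    rw [hsk (k + 1) (by omega), norm_mul, norm_exp_mode]
    have : (1:ℝ) ≤ ‖mu lam (k + (0 + 1))‖ + ((k + (0 + 1) : ℕ) : ℝ) := by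
      have := norm_nonneg (mu lam (k + (0 + 1)))
      push_cast
      linarith [(Nat.cast_nonneg k : (0:ℝ) ≤ k)]
    have hM : 0 ≤ M := (norm_nonneg _).trans (hb 0)
    refine mul_le_mul (hb _) ?_ (Real.exp_pos _).le hM
    exact le_mul_of_one_le_left (Real.exp_pos _).le this
  have hφ : ContinuousOn (fun t => u (x, t)) (Icc 0 Real.pi) :=
    hcl.comp (by fun_prop) fun t ht => ht
  have h := hasSum_sine hφ (hb0 x hp1.le) (hbpi x hp1.le) (fun k => rfl) hsum hp2
  have h2 := ((hasSum_nat_add_iff' 2).2 h).tsum_eq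
  have hexp : Complex.exp (-mu lam 1 * ((x : ℂ) - a)) =
      Complex.exp (mu lam 1 * a) * Complex.exp (-mu lam 1 * (x : ℂ)) := by
    rw [← Complex.exp_add]
    ring_nf
  have h1 := hsk 1 le_rfl
  rw [hexp] at h1
  have e : ∀ k : ℕ, mode a ((2 / Real.pi : ℂ) * b (k + 2)) (mu lam (k + 2)) (k + 2) (x, y) =
      (2 / Real.pi : ℂ) * s (k + 2) * Complex.sin (((k + 2 : ℕ) : ℂ) * y) := by
    intro k
    rw [hsk (k + 2) (by omega), mode]
    ring
  rw [tsum_congr e]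
  refine Eq.trans ?_ h2.symm
  simp only [Finset.sum_range_succ, Finset.sum_range_zero]
  change _ = _ - (0 + 2 / (Real.pi : ℂ) * s 0 * Complex.sin (((0 : ℕ) : ℂ) * y) +
    2 / (Real.pi : ℂ) * s 1 * Complex.sin (((1 : ℕ) : ℂ) * y))
  rw [h1]
  simp only [Nat.cast_zero, zero_mul, Complex.sin_zero, mul_zero, Nat.cast_one, one_mul, zero_add]
  ring

/-- Proposition 1.2, upper-channel asymptotics: a square-integrable generalized eigenfunction
of the one-window problem behaves like `c₊ e^{-√(1-λ) x₁} sin x₂` in the upper channel,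
up to an error `O(e^{-Re√(4-λ) x₁})`, together with its gradient. -/
theorem stmt1
    (d a : ℝ) (hd0 : 0 < d) (hdπ : d ≤ Real.pi) (ha : 0 < a)
    (lam : ℂ) (hlam : ∀ t : ℝ, 1 ≤ t → lam ≠ (t : ℂ))
    (Pia : Set (ℝ × ℝ))
    (hPia : Pia = {p : ℝ × ℝ | (0 < p.2 ∧ p.2 < Real.pi) ∨ (-d < p.2 ∧ p.2 < 0) ∨
      (p.2 = 0 ∧ |p.1| < a)})
    (ψ : ℝ × ℝ → ℂ)
    (hcont : ContinuousOn ψ {p : ℝ × ℝ | -d ≤ p.2 ∧ p.2 ≤ Real.pi})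
    (hsmooth : ContDiffOn ℝ (⊤ : ℕ∞) ψ Pia)
    (hL2 : IntegrableOn (fun p => ‖ψ p‖ ^ 2) Pia)
    (hL2grad : IntegrableOn (fun p => ‖fderiv ℝ ψ p‖ ^ 2) Pia)
    (hHelm : ∀ p ∈ Pia, lap ψ p + lam * ψ p = 0)
    (hbdry : ∀ x₁ : ℝ, ψ (x₁, Real.pi) = 0 ∧ ψ (x₁, -d) = 0)
    (hwin : ∀ x₁ : ℝ, a ≤ |x₁| → ψ (x₁, 0) = 0) :
    ∃ c : ℂ, ∃ C : ℝ, 0 < C ∧ ∀ x₁ x₂ : ℝ, a + 1 ≤ x₁ → 0 ≤ x₂ → x₂ ≤ Real.pi →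
      ‖ψ (x₁, x₂) - c * Complex.exp (-(csqrt (1 - lam)) * (x₁ : ℂ)) *
          Complex.sin (x₂ : ℂ)‖ ≤ C * Real.exp (-(csqrt (4 - lam)).re * x₁) ∧
      ‖fderiv ℝ (fun p : ℝ × ℝ =>
          ψ p - c * Complex.exp (-(csqrt (1 - lam)) * (p.1 : ℂ)) * Complex.sin (p.2 : ℂ))
          (x₁, x₂)‖ ≤ C * Real.exp (-(csqrt (4 - lam)).re * x₁) := by
  have pp := Real.pi_pos
  have hsub : upper ⊆ Pia := fun p hp => by rw [hPia]; exact Or.inl hp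
  have v0 : ContDiffOn ℝ (⊤ : ℕ∞) ψ upper := hsmooth.mono hsub
  have v1 := contDiffOn_fderiv_apply v0 (1, 0)
  have v2 := contDiffOn_fderiv_apply v0 (0, 1)
  have v11 := contDiffOn_fderiv_apply v1 (1, 0)
  have v22 := contDiffOn_fderiv_apply v2 (0, 1)
  have hcl : ContinuousOn ψ {p : ℝ × ℝ | p.2 ∈ Icc 0 Real.pi} :=
    hcont.mono fun p hp => ⟨by linarith [hp.1], hp.2⟩
  have hb0 : ∀ x, a ≤ x → ψ (x, 0) = 0 := fun x hx => hwin x (hx.trans (le_abs_self x))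
  have hbpi : ∀ x, a ≤ x → ψ (x, Real.pi) = 0 := fun x _ => (hbdry x).1
  set b : ℕ → ℂ := fun k => ∫ s in (0:ℝ)..Real.pi, ψ (a, s) * Complex.sin ((k : ℂ) * s) with hb
  have hmode : ∀ k : ℕ, 1 ≤ k → ∀ x, a ≤ x →
      ∫ s in (0:ℝ)..Real.pi, ψ (x, s) * Complex.sin ((k : ℂ) * s) =
        b k * Complex.exp (-mu lam k * (x - a)) := fun k hk x hx =>
    mode_decay hlam v0.continuousOn v1.continuousOn v11.continuousOn v2.continuousOn
      v22.continuousOn (fun p hp => (hasDerivAt_slices v0 hp).1)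
      (fun p hp => (hasDerivAt_slices v1 hp).1) (fun p hp => (hasDerivAt_slices v0 hp).2)
      (fun p hp => (hasDerivAt_slices v2 hp).2) (fun p hp => hHelm p (hsub hp)) hcl hb0 hbpi
      (hL2.mono_set hsub) hk hx
  obtain ⟨M, hM⟩ : ∃ M, ∀ k, ‖b k‖ ≤ M := by
    have hφ : ContinuousOn (fun t => ψ (a, t)) (Icc 0 Real.pi) :=
      hcl.comp (by fun_prop) fun t ht => ht
    obtain ⟨B, hB⟩ := isCompact_Icc.exists_bound_of_continuousOn hφ
    refine ⟨B * |Real.pi - 0|, fun k =>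
      intervalIntegral.norm_integral_le_of_norm_le_const fun s hs => ?_⟩
    rw [uIoc_of_le pp.le] at hs
    rw [norm_mul]
    exact (mul_le_of_le_one_right (norm_nonneg _) (norm_sin_nat_mul_le k s)).trans
      (hB s ⟨hs.1.le, hs.2⟩)
  obtain ⟨C, hC, htail⟩ := tail_bounds hlam a
    (A := fun k => (2 / Real.pi : ℂ) * b (k + 2)) (M := ‖(2 / Real.pi : ℂ)‖ * M) fun k => by
      rw [norm_mul]
      exact mul_le_mul_of_nonneg_left (hM _) (norm_nonneg _)
  have m1 : csqrt (1 - lam) = mu lam 1 := by simp [mu]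
  have m2 : csqrt (4 - lam) = mu lam 2 := by norm_num [mu]
  rw [m1, m2]
  have hw : ∀ p : ℝ × ℝ, a < p.1 → p.2 ∈ Icc 0 Real.pi → _ := fun p h1 h2 =>
    sub_first_mode_eq_tsum hlam hcl hb0 hbpi hM hmode h1 h2
  refine ⟨(2 / Real.pi : ℂ) * b 1 * Complex.exp (mu lam 1 * a), C, hC,
    fun x y hx hy0 hypi => ?_⟩
  obtain ⟨hval, L, hL, hLn⟩ := htail (x, y) hx
  have hxa : a < x := by linarith
  refine ⟨by rw [hw (x, y) hxa ⟨hy0, hypi⟩]; exact hval, ?_⟩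
  -- where the remainder is not differentiable (possibly on the walls), `fderiv` is `0`
  by_cases hdiff : DifferentiableAt ℝ (fun p : ℝ × ℝ => ψ p - (2 / Real.pi : ℂ) * b 1 *
      Complex.exp (mu lam 1 * a) * Complex.exp (-mu lam 1 * (p.1 : ℂ)) * Complex.sin (p.2 : ℂ))
      (x, y)
  · -- otherwise it is determined by the values in the closed channel
    have hU : UniqueDiffWithinAt ℝ (Ioi a ×ˢ Icc 0 Real.pi) (x, y) :=
      ((uniqueDiffOn_Ioi a).prod (uniqueDiffOn_Icc pp)) (x, y) ⟨hxa, hy0, hypi⟩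
    have hL' := hL.hasFDerivWithinAt (s := Ioi a ×ˢ Icc 0 Real.pi) |>.congr
      (fun p hp => hw p hp.1 hp.2) (hw (x, y) hxa ⟨hy0, hypi⟩)
    rw [hU.eq hdiff.hasFDerivAt.hasFDerivWithinAt hL']
    exact hLn
  · rw [fderiv_zero_of_not_differentiableAt hdiff, norm_zero]
    positivity

end
end
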